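/- (Estimate 3, right extreme subdomain.) Let ε ∈ C^∞(cl(Ω_I × (0,T))) satisfy: 𝒫_p ε = 0 in Ω_I × (0,T); ε = 0 on (∂D × [a_I,b_I]) × [0,T]; ε(·,·,0) = 0 on Ω_I; and ε(·,b_I,·) = 0 on D × (0,T). Set ν = ∂_{x_n}ε. Let φ be a strictly positive C^2 function with φ'/φ and φ''/φ bounded such that 4p + 2 b_n(t)/a_{n,n}(t) + φ'(b_I)/φ(b_I) < 0 for all t ∈ [0,T], and let ϕ be a strictly positive C^1 function on [0,T] with ϕ'(t)/ϕ(t) ≤ −Γ for all t, where Γ = sup_t|a_{n,n}| · sup|φ''/φ| + 2 sup_t|a_{n,n}| · (sup|φ'/φ|)² + 2 sup_t|c − p b_n − p² a_{n,n}| + sup_t|2p a_{n,n}+b_n| · sup|φ'/φ|. Then for every (X, x_n, t) ∈ cl(D) × [a_I,b_I] × [0,T]: ν(X,x_n,t)² φ(x_n) ϕ(t) ≤ sup_{cl(D)×[0,T]} ν(·,a_I,·)² φ(a_I) ϕ(·). -/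

import Mathlib

open Set Filter

/-- Spatial partial derivative `∂u/∂xᵢ` of a function `u : ℝⁿ → ℝ`. -/
noncomputable def pd1 {m : ℕ} (i : Fin m) (u : (Fin m → ℝ) → ℝ) (x : Fin m → ℝ) : ℝ :=
  fderiv ℝ u x (Pi.single i 1)

/-- Second spatial partial derivative `∂²u/∂xᵢ∂xⱼ`. -/
noncomputable def pd2 {m : ℕ} (i j : Fin m) (u : (Fin m → ℝ) → ℝ) (x : Fin m → ℝ) : ℝ :=
  pd1 i (fun y => pd1 j u y) x

/-- The parabolic operator
`𝒫u = ∂ₜu − Σᵢⱼ aᵢⱼ(t) ∂ᵢ∂ⱼu + Σᵢ bᵢ(t) ∂ᵢu + c(t) u`. -/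
noncomputable def parabolicOp {m : ℕ} (a : Fin m → Fin m → ℝ → ℝ) (b : Fin m → ℝ → ℝ)
    (c : ℝ → ℝ) (u : (Fin m → ℝ) → ℝ → ℝ) (x : Fin m → ℝ) (t : ℝ) : ℝ :=
  deriv (fun s => u x s) t
    - ∑ i, ∑ j, a i j t * pd2 i j (fun y => u y t) x
    + ∑ i, b i t * pd1 i (fun y => u y t) x
    + c t * u x t

/-- The transformed operator `𝒫ₚε = ∂ₜε − Σᵢⱼ aᵢⱼ ∂ᵢ∂ⱼε
+ Σ_{i<n} (2p aᵢₙ + bᵢ) ∂ᵢε + (2p aₙₙ + bₙ) ∂ₙε + (c − p bₙ − p² aₙₙ) ε`,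
in dimension `n+1`, the last coordinate playing the role of `xₙ`. -/
noncomputable def transOp {n : ℕ} (p : ℝ) (a : Fin (n+1) → Fin (n+1) → ℝ → ℝ)
    (b : Fin (n+1) → ℝ → ℝ) (c : ℝ → ℝ)
    (ε : (Fin (n+1) → ℝ) → ℝ → ℝ) (x : Fin (n+1) → ℝ) (t : ℝ) : ℝ :=
  deriv (fun s => ε x s) t
    - ∑ i, ∑ j, a i j t * pd2 i j (fun y => ε y t) x
    + ∑ i ∈ Finset.univ.erase (Fin.last n),
        (2 * p * a i (Fin.last n) t + b i t) * pd1 i (fun y => ε y t) x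
    + (2 * p * a (Fin.last n) (Fin.last n) t + b (Fin.last n) t) *
        pd1 (Fin.last n) (fun y => ε y t) x
    + (c t - p * b (Fin.last n) t - p ^ 2 * a (Fin.last n) (Fin.last n) t) * ε x t

/-!
The squared normal derivative is controlled by a maximum principle for `W = ν² φ(xₙ) ϕ(t) - η t`,
`η > 0`. Consider a point at a time in `(0, T)` at which `W` attains its maximum over all times up
to that one.

* In the interior, `ν` solves the same equation as `ε`. The first-order conditions express
  `∂ᵢν` through `ν`, the second-order conditions are contracted against the nonnegative matrix
  `(aᵢⱼ)`, and what remains bounds the logarithmic time derivative of `ν² φ` by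
  `aₙₙ(2(φ'/φ)² - φ''/φ) + (2p aₙₙ + bₙ)φ'/φ - 2(c - p bₙ - p² aₙₙ)`, which the decay of `ϕ`
  absorbs. This contradicts `η > 0`.
* On the right face, all derivatives of `ε` tangential to the face vanish, so the equation, which
  extends to the face by continuity, reduces to `aₙₙ ∂ₙν = (2p aₙₙ + bₙ)ν`. A maximum there with
  `ν ≠ 0` forces `2 ∂ₙν/ν + φ'/φ ≥ 0`, which is excluded by the sign condition.
* On the lateral and the initial boundary `ε` vanishes along the `xₙ`-direction, hence `ν = 0`.

Only the left face is left.
-/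

open scoped Topology ContDiff

section LinearAlgebra

variable {ι : Type*} [Fintype ι]

open scoped MatrixOrder in
lemma sum_mul_nonneg_of_posSemidef {A H : Matrix ι ι ℝ}
    (hA : ∀ ξ : ι → ℝ, 0 ≤ ∑ i, ∑ j, A i j * ξ i * ξ j) (hH : H.PosSemidef) :
    0 ≤ ∑ i, ∑ j, A i j * H i j := by
  classical
  obtain ⟨M, hM⟩ := CStarAlgebra.nonneg_iff_eq_star_mul_self.mp hH.nonneg
  have hH_apply : ∀ i j, H i j = ∑ l, M l i * M l j := fun i j => by
    simp [hM, Matrix.mul_apply, Matrix.star_eq_conjTranspose]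
  calc 0 ≤ ∑ l, ∑ i, ∑ j, A i j * M l i * M l j := Finset.sum_nonneg fun l _ => hA (M l)
    _ = ∑ i, ∑ j, ∑ l, A i j * M l i * M l j := by
      rw [Finset.sum_comm]
      exact Finset.sum_congr rfl fun i _ => Finset.sum_comm
    _ = ∑ i, ∑ j, A i j * H i j := by simp only [hH_apply, Finset.mul_sum, mul_assoc]

lemma sum_mul_nonneg_of_elliptic {A : ι → ι → ℝ} {μ : ℝ} (hμ : 0 ≤ μ)
    (hA : ∀ ξ : ι → ℝ, μ * ∑ i, ξ i ^ 2 ≤ ∑ i, ∑ j, A i j * ξ i * ξ j) (ξ : ι → ℝ) :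
    0 ≤ ∑ i, ∑ j, A i j * ξ i * ξ j :=
  (mul_nonneg hμ (Finset.sum_nonneg fun i _ => sq_nonneg (ξ i))).trans (hA ξ)

lemma diag_pos_of_elliptic {A : ι → ι → ℝ} {μ : ℝ} (hμ : 0 < μ)
    (hA : ∀ ξ : ι → ℝ, μ * ∑ i, ξ i ^ 2 ≤ ∑ i, ∑ j, A i j * ξ i * ξ j) (k : ι) : 0 < A k k := by
  classical
  exact hμ.trans_le (by simpa [Pi.single_apply] using hA (Pi.single k 1))

end LinearAlgebra

section SecondDerivativeTest

lemma deriv_deriv_nonpos_of_isLocalMax {g : ℝ → ℝ} {r : ℝ} (hmax : IsLocalMax g r)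
    (hg : ContinuousAt g r) : deriv (deriv g) r ≤ 0 := by
  by_contra! hpos
  have hmin : IsLocalMin g r := isLocalMin_of_deriv_deriv_pos hpos hmax.deriv_eq_zero hg
  have hconst : g =ᶠ[𝓝 r] fun _ => g r := by
    filter_upwards [hmin, hmax] with s h₁ h₂ using le_antisymm h₂ h₁
  have hderiv : deriv g =ᶠ[𝓝 r] fun _ => 0 := by simpa using hconst.deriv
  simp [hderiv.deriv_eq] at hpos

lemma second_order_nonpos_of_isLocalMax_sq_mul {u u' w w' : ℝ → ℝ} {u'' w'' r : ℝ}
    (hu : ∀ᶠ s in 𝓝 r, HasDerivAt u (u' s) s) (hu' : HasDerivAt u' u'' r)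
    (hw : ∀ᶠ s in 𝓝 r, HasDerivAt w (w' s) s) (hw' : HasDerivAt w' w'' r) (hw_pos : 0 < w r)
    (hmax : IsLocalMax (fun s => u s ^ 2 * w s) r) :
    2 * w r * (u r * u'') + (w'' - 2 * w' r ^ 2 / w r) * u r ^ 2 ≤ 0 := by
  have hfirst : ∀ᶠ s in 𝓝 r, HasDerivAt (fun s => u s ^ 2 * w s)
      (2 * u s * u' s * w s + u s ^ 2 * w' s) s := by
    filter_upwards [hu, hw] with s hus hws
    exact ((hus.pow 2).mul hws).congr_deriv (by simp)
  have hsecond : HasDerivAt (fun s => 2 * u s * u' s * w s + u s ^ 2 * w' s)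
      (2 * u' r ^ 2 * w r + 2 * u r * u'' * w r + 4 * u r * u' r * w' r + u r ^ 2 * w'') r := by
    have hur := hu.self_of_nhds
    refine ((((hur.const_mul 2).mul hu').mul hw.self_of_nhds).add
      ((hur.pow 2).mul hw')).congr_deriv ?_
    simp only [Pi.mul_apply, Pi.pow_apply, Nat.cast_ofNat, Nat.add_one_sub_one, pow_one]
    ring
  have hnonpos := deriv_deriv_nonpos_of_isLocalMax hmax hfirst.self_of_nhds.continuousAt
  have hderiv : deriv (fun s => u s ^ 2 * w s) =ᶠ[𝓝 r]
      fun s => 2 * u s * u' s * w s + u s ^ 2 * w' s := hfirst.mono fun s hs => hs.deriv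
  rw [hderiv.deriv_eq, hsecond.deriv] at hnonpos
  have hsquare : 2 * u' r ^ 2 * w r + 2 * u r * u'' * w r + 4 * u r * u' r * w' r
      + u r ^ 2 * w'' = 2 * w r * (u r * u'') + (w'' - 2 * w' r ^ 2 / w r) * u r ^ 2
        + 2 / w r * (u' r * w r + u r * w' r) ^ 2 := by
    field_simp
    ring
  have : 0 ≤ 2 / w r * (u' r * w r + u r * w' r) ^ 2 := by positivity
  linarith

end SecondDerivativeTest

/-- The derivative of `f` at `q` within `S` in the direction `v`. It is read off the Fréchet
derivative within `S`, rather than off the restriction of `f` to a line, so that it is linear in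
`v` and can be iterated up to the boundary of `S`. -/
noncomputable def dirDeriv {V : Type*} [NormedAddCommGroup V] [NormedSpace ℝ V]
    (S : Set V) (v : V) (f : V → ℝ) (q : V) : ℝ :=
  fderivWithin ℝ f S q v

section DirDeriv

variable {V : Type*} [NormedAddCommGroup V] [NormedSpace ℝ V] {S : Set V} {f g : V → ℝ} {q v : V}

lemma contDiffOn_dirDeriv {m n : ℕ∞ω} (hf : ContDiffOn ℝ n f S) (hS : UniqueDiffOn ℝ S)
    (hmn : m + 1 ≤ n) (v : V) : ContDiffOn ℝ m (dirDeriv S v f) S :=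
  (hf.fderivWithin hS hmn).clm_apply contDiffOn_const

lemma dirDeriv_congr (h : EqOn f g S) (hq : q ∈ S) (v : V) :
    dirDeriv S v f q = dirDeriv S v g q := by
  rw [dirDeriv, dirDeriv, fderivWithin_congr h (h hq)]

lemma dirDeriv_neg_dir : dirDeriv S (-v) f q = -dirDeriv S v f q := map_neg _ _

lemma dirDeriv_dirDeriv (hf : ContDiffOn ℝ 2 f S) (hS : UniqueDiffOn ℝ S) (v w : V)
    (hq : q ∈ S) :
    dirDeriv S v (dirDeriv S w f) q = fderivWithin ℝ (fderivWithin ℝ f S) S q v w := by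
  have hdiff : DifferentiableWithinAt ℝ (fderivWithin ℝ f S) S q :=
    (hf.fderivWithin hS (m := 1) one_add_one_eq_two.le).differentiableOn one_ne_zero q hq
  have happly := hdiff.hasFDerivWithinAt.clm_apply (hasFDerivWithinAt_const w q S)
  have hderiv := happly.fderivWithin (hS q hq)
  unfold dirDeriv
  rw [hderiv]
  simp

lemma dirDeriv_sum_smul_dirDeriv_sum_smul {ι : Type*} (hf : ContDiffOn ℝ 2 f S)
    (hS : UniqueDiffOn ℝ S) (s : Finset ι) (ξ : ι → ℝ) (e : ι → V) (hq : q ∈ S) :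
    dirDeriv S (∑ i ∈ s, ξ i • e i) (dirDeriv S (∑ i ∈ s, ξ i • e i) f) q
      = ∑ i ∈ s, ∑ j ∈ s, ξ i * ξ j * dirDeriv S (e i) (dirDeriv S (e j) f) q := by
  simp only [dirDeriv_dirDeriv hf hS _ _ hq, map_sum, map_smul, sum_apply, smul_apply,
    smul_eq_mul, Finset.mul_sum, mul_assoc]
  rw [Finset.sum_comm]
  exact Finset.sum_congr rfl fun i _ => Finset.sum_congr rfl fun j _ => by ring

lemma dirDeriv_comm (hf : ContDiffOn ℝ 2 f S) (hS : UniqueDiffOn ℝ S) (hq : q ∈ S)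
    (hcl : q ∈ closure (interior S)) (v w : V) :
    dirDeriv S v (dirDeriv S w f) q = dirDeriv S w (dirDeriv S v f) q := by
  rw [dirDeriv_dirDeriv hf hS v w hq, dirDeriv_dirDeriv hf hS w v hq]
  exact (hf q hq).isSymmSndFDerivWithinAt (by simp) hS hcl hq v w

lemma eventually_hasDerivAt_line (hf : DifferentiableOn ℝ f S) (hq : S ∈ 𝓝 q) (v : V) :
    ∀ᶠ s : ℝ in 𝓝 0,
      HasDerivAt (fun s : ℝ => f (q + s • v)) (dirDeriv S v f (q + s • v)) s := by
  have hline : ∀ s : ℝ, HasDerivAt (fun s : ℝ => q + s • v) v s := fun s => by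
    simpa using ((hasDerivAt_id s).smul_const v).const_add q
  have hline_tendsto : Tendsto (fun s : ℝ => q + s • v) (𝓝 0) (𝓝 q) := by
    simpa using (hline 0).continuousAt.tendsto
  have hmem : ∀ᶠ s : ℝ in 𝓝 0, S ∈ 𝓝 (q + s • v) :=
    hline_tendsto.eventually (eventually_mem_nhds_iff.2 hq)
  filter_upwards [hmem] with s hs
  exact ((hf _ (mem_of_mem_nhds hs)).hasFDerivWithinAt.hasFDerivAt hs).comp_hasDerivAt s (hline s)

/-- This pins down `dirDeriv S v f` at points where `S` has no unique derivative, such as those of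
the lateral boundary of a cylinder over an arbitrary open set. -/
lemma dirDeriv_eq_of_hasLineDerivWithinAt {d : ℝ} (hf : DifferentiableWithinAt ℝ f S q)
    (hline : UniqueDiffWithinAt ℝ ((fun s : ℝ => q + s • v) ⁻¹' S) 0)
    (hd : HasLineDerivWithinAt ℝ f d S q v) : dirDeriv S v f q = d :=
  hline.eq_deriv _ (hf.hasFDerivWithinAt.hasLineDerivWithinAt v) hd

lemma dirDeriv_eq_zero_of_line (hf : DifferentiableWithinAt ℝ f S q)
    (hline : UniqueDiffWithinAt ℝ ((fun s : ℝ => q + s • v) ⁻¹' S) 0) (hq : q ∈ S)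
    (h0 : ∀ s : ℝ, q + s • v ∈ S → f (q + s • v) = 0) : dirDeriv S v f q = 0 :=
  dirDeriv_eq_of_hasLineDerivWithinAt hf hline <|
    (hasDerivWithinAt_const (0 : ℝ) _ (0 : ℝ)).congr_of_mem h0 (by simpa using hq)

lemma continuousOn_dirDeriv (hf : ContDiffOn ℝ 1 f S)
    (hline : ∀ q ∈ S, UniqueDiffWithinAt ℝ ((fun s : ℝ => q + s • v) ⁻¹' S) 0) :
    ContinuousOn (dirDeriv S v f) S := by
  intro q hq
  obtain ⟨N, hN, -, -, f', hf', hf'_cont⟩ :=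
    (contDiffWithinAt_succ_iff_hasFDerivWithinAt' (n := 0) (by simp)).1 (hf q hq)
  rw [insert_eq_of_mem hq] at hN
  have heq : ∀ y ∈ S, y ∈ N → dirDeriv S v f y = f' y v := fun y hyS hyN =>
    dirDeriv_eq_of_hasLineDerivWithinAt (hf' y hyN).differentiableWithinAt (hline y hyS)
      ((hf' y hyN).hasLineDerivWithinAt v)
  refine (hf'_cont.continuousWithinAt.clm_apply continuousWithinAt_const).congr_of_eventuallyEq
    ?_ (heq q hq (mem_of_mem_nhdsWithin hq hN))
  filter_upwards [hN, self_mem_nhdsWithin] with y hyN hyS using heq y hyS hyN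

lemma dirDeriv_slice {E : Type*} [NormedAddCommGroup E] [NormedSpace ℝ E] {K : Set E}
    {I : Set ℝ} {F : E × ℝ → ℝ} {x e : E} {t : ℝ}
    (hF : DifferentiableWithinAt ℝ F (K ×ˢ I) (x, t)) (ht : t ∈ I)
    (hline : UniqueDiffWithinAt ℝ ((fun s : ℝ => x + s • e) ⁻¹' K) 0) :
    dirDeriv K e (fun y => F (y, t)) x = dirDeriv (K ×ˢ I) (e, 0) F (x, t) := by
  have hslice : HasFDerivWithinAt (fun y => F (y, t))
      ((fderivWithin ℝ F (K ×ˢ I) (x, t)).comp (ContinuousLinearMap.inl ℝ E ℝ)) K x :=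
    hF.hasFDerivWithinAt.comp (f := fun y => (y, t)) x
      (hasFDerivAt_prodMk_left x t).hasFDerivWithinAt fun y hy => ⟨hy, ht⟩
  exact dirDeriv_eq_of_hasLineDerivWithinAt hslice.differentiableWithinAt hline
    (hslice.hasLineDerivWithinAt e)

end DirDeriv

/-- The part of `U` in the half-space `{ℓ ≤ β}`. For open `U` it is a region with the flat boundary
face `U ∩ {ℓ = β}`, on which Dirichlet data are prescribed below. -/
def halfRegion {V : Type*} [NormedAddCommGroup V] [NormedSpace ℝ V]
    (U : Set V) (ℓ : V →L[ℝ] ℝ) (β : ℝ) : Set V :=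
  U ∩ ℓ ⁻¹' Iic β

section HalfRegion

variable {V : Type*} [NormedAddCommGroup V] [NormedSpace ℝ V] {U : Set V} {ℓ : V →L[ℝ] ℝ}
  {β : ℝ} {g : V → ℝ} {q v : V}

lemma isOpen_inter_preimage_Iio (hU : IsOpen U) : IsOpen (U ∩ ℓ ⁻¹' Iio β) :=
  hU.inter (isOpen_Iio.preimage ℓ.continuous)

lemma inter_preimage_Iio_subset_halfRegion : U ∩ ℓ ⁻¹' Iio β ⊆ halfRegion U ℓ β :=
  inter_subset_inter_right U (preimage_mono Iio_subset_Iic_self)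

lemma halfRegion_mem_nhds (hU : IsOpen U) (hq : q ∈ U) (hlt : ℓ q < β) :
    halfRegion U ℓ β ∈ 𝓝 q :=
  mem_of_superset ((isOpen_inter_preimage_Iio hU).mem_nhds ⟨hq, hlt⟩)
    inter_preimage_Iio_subset_halfRegion

lemma uniqueDiffOn_halfRegion (hU : IsOpen U) (hℓ : ℓ ≠ 0) :
    UniqueDiffOn ℝ (halfRegion U ℓ β) := by
  obtain ⟨y, hy⟩ := LinearMap.surjective (f := ℓ.toLinearMap) (mod_cast hℓ) (β - 1)
  have hinterior : (interior (ℓ ⁻¹' Iic β)).Nonempty :=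
    ⟨y, interior_maximal (preimage_mono Iio_subset_Iic_self) (isOpen_Iio.preimage ℓ.continuous)
      (show ℓ y < β from hy.trans_lt (sub_one_lt β))⟩
  have hhalfSpace := uniqueDiffOn_convex ((convex_Iic β).linear_preimage ℓ.toLinearMap) hinterior
  rw [halfRegion, inter_comm]
  exact hhalfSpace.inter hU

lemma tendsto_line (q v : V) : Tendsto (fun s : ℝ => q + s • v) (𝓝 0) (𝓝 q) := by
  have hcont : Continuous fun s : ℝ => q + s • v := by fun_prop
  simpa using hcont.tendsto 0

lemma eventually_line_mem_of_inward (hU : IsOpen U) (hq : q ∈ halfRegion U ℓ β) (hv : ℓ v < 0) :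
    ∀ᶠ s : ℝ in 𝓝[>] 0, q + s • v ∈ U ∩ ℓ ⁻¹' Iio β := by
  filter_upwards [(tendsto_line q v).mono_left nhdsWithin_le_nhds (hU.mem_nhds hq.1),
    self_mem_nhdsWithin] with s hsU hs
  refine ⟨hsU, ?_⟩
  have hle : ℓ q ≤ β := hq.2
  have hneg : s * ℓ v < 0 := mul_neg_of_pos_of_neg hs hv
  simp only [mem_preimage, map_add, map_smul, smul_eq_mul, mem_Iio]
  linarith

lemma eventually_line_mem_of_tangential (hU : IsOpen U) (hq : q ∈ halfRegion U ℓ β)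
    (hv : ℓ v = 0) : ∀ᶠ s : ℝ in 𝓝 0, q + s • v ∈ halfRegion U ℓ β := by
  filter_upwards [tendsto_line q v (hU.mem_nhds hq.1)] with s hsU
  exact ⟨hsU, by simpa [hv] using hq.2⟩

lemma halfRegion_subset_closure_interior (hU : IsOpen U) (hℓ : ℓ ≠ 0) :
    halfRegion U ℓ β ⊆ closure (interior (halfRegion U ℓ β)) := by
  intro q hq
  obtain ⟨v, hv⟩ := LinearMap.surjective (f := ℓ.toLinearMap) (mod_cast hℓ) (-1)
  refine mem_closure_of_tendsto (b := 𝓝[>] 0)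
    ((tendsto_line q v).mono_left nhdsWithin_le_nhds) ?_
  filter_upwards [eventually_line_mem_of_inward hU hq (hv.trans_lt neg_one_lt_zero)] with s hs
  exact interior_maximal inter_preimage_Iio_subset_halfRegion (isOpen_inter_preimage_Iio hU) hs

lemma eq_zero_of_inward_line (hU : IsOpen U) (hg : ContinuousOn g (halfRegion U ℓ β))
    (hq : q ∈ halfRegion U ℓ β) (hv : ℓ v < 0)
    (h0 : ∀ s : ℝ, q + s • v ∈ U ∩ ℓ ⁻¹' Iio β → g (q + s • v) = 0) : g q = 0 := by
  have hinward := eventually_line_mem_of_inward hU hq hv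
  have hline : Tendsto (fun s : ℝ => q + s • v) (𝓝[>] 0) (𝓝[halfRegion U ℓ β] q) :=
    tendsto_nhdsWithin_iff.2 ⟨(tendsto_line q v).mono_left nhdsWithin_le_nhds,
      hinward.mono fun _ hs => inter_preimage_Iio_subset_halfRegion hs⟩
  have hconst : Tendsto (g ∘ fun s : ℝ => q + s • v) (𝓝[>] 0) (𝓝 0) :=
    tendsto_const_nhds.congr' (hinward.mono fun s hs => (h0 s hs).symm)
  exact tendsto_nhds_unique ((hg q hq).tendsto.comp hline) hconst

lemma dirDeriv_eq_zero_of_tangential (hU : IsOpen U) (hg : DifferentiableOn ℝ g (halfRegion U ℓ β))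
    (hface : ∀ y ∈ halfRegion U ℓ β, ℓ y = β → g y = 0) (hv : ℓ v = 0)
    (hq : q ∈ halfRegion U ℓ β) (hqβ : ℓ q = β) : dirDeriv (halfRegion U ℓ β) v g q = 0 :=
  dirDeriv_eq_zero_of_line (hg q hq)
    (uniqueDiffWithinAt_of_mem_nhds (eventually_line_mem_of_tangential hU hq hv)) hq
    fun _ hs => hface _ hs (by simp [hv, hqβ])

end HalfRegion

section WeightedMaximum

variable {V : Type*} [NormedAddCommGroup V] [NormedSpace ℝ V] {S : Set V} {ℓ : V →L[ℝ] ℝ}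
  {u : V → ℝ} {φ : ℝ → ℝ} {q v : V}

lemma nonpos_of_hasDerivWithinAt_Ioi_of_eventually_le {g : ℝ → ℝ} {d r : ℝ}
    (hg : HasDerivWithinAt g d (Ioi r) r) (hmax : ∀ᶠ s in 𝓝[>] r, g s ≤ g r) : d ≤ 0 := by
  refine le_of_tendsto ((hasDerivWithinAt_iff_tendsto_slope' self_notMem_Ioi).1 hg) ?_
  filter_upwards [hmax, self_mem_nhdsWithin] with s hs hrs
  rw [slope_def_field]
  exact div_nonpos_of_nonpos_of_nonneg (sub_nonpos.2 hs) (sub_nonneg.2 (mem_Ioi.1 hrs).le)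

lemma hasDerivWithinAt_Ioi_line (hu : DifferentiableWithinAt ℝ u S q)
    (hmem : ∀ᶠ s : ℝ in 𝓝[>] 0, q + s • v ∈ S) :
    HasDerivWithinAt (fun s : ℝ => u (q + s • v)) (dirDeriv S v u q) (Ioi 0) 0 :=
  HasDerivWithinAt.mono_of_mem_nhdsWithin (hu.hasFDerivWithinAt.hasLineDerivWithinAt v) hmem

lemma hasDerivAt_comp_line {φ' : ℝ} {r : ℝ} (hφ : HasDerivAt φ φ' (ℓ (q + r • v))) :
    HasDerivAt (fun s : ℝ => φ (ℓ (q + s • v))) (φ' * ℓ v) r := by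
  have hline : HasDerivAt (fun s : ℝ => ℓ (q + s • v)) (ℓ v) r := by
    simpa using ((hasDerivAt_id r).mul_const (ℓ v)).const_add (ℓ q)
  exact hφ.comp r hline

lemma first_order_nonpos_of_eventually_le (hu : DifferentiableWithinAt ℝ u S q)
    (hφ : DifferentiableAt ℝ φ (ℓ q)) (hmem : ∀ᶠ s : ℝ in 𝓝[>] 0, q + s • v ∈ S)
    (hmax : ∀ᶠ s : ℝ in 𝓝[>] 0,
      u (q + s • v) ^ 2 * φ (ℓ (q + s • v)) ≤ u q ^ 2 * φ (ℓ q)) :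
    2 * φ (ℓ q) * (u q * dirDeriv S v u q) + u q ^ 2 * (deriv φ (ℓ q) * ℓ v) ≤ 0 := by
  have hφ_line : HasDerivAt (fun s : ℝ => φ (ℓ (q + s • v))) (deriv φ (ℓ q) * ℓ v) 0 :=
    hasDerivAt_comp_line (by simpa using hφ.hasDerivAt)
  have hderiv := ((hasDerivWithinAt_Ioi_line hu hmem).pow 2).mul hφ_line.hasDerivWithinAt
  refine le_of_eq_of_le ?_
    (nonpos_of_hasDerivWithinAt_Ioi_of_eventually_le hderiv (by simpa using hmax))
  simp only [Nat.cast_ofNat, zero_smul, add_zero, Nat.add_one_sub_one, pow_one, Pi.pow_apply,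
    add_left_inj]
  ring

lemma first_order_eq_zero_of_line_max (hu : DifferentiableWithinAt ℝ u S q)
    (hφ : DifferentiableAt ℝ φ (ℓ q)) (hmem : ∀ᶠ s : ℝ in 𝓝 0, q + s • v ∈ S)
    (hmax : ∀ s : ℝ, q + s • v ∈ S →
      u (q + s • v) ^ 2 * φ (ℓ (q + s • v)) ≤ u q ^ 2 * φ (ℓ q)) :
    2 * φ (ℓ q) * (u q * dirDeriv S v u q) + u q ^ 2 * (deriv φ (ℓ q) * ℓ v) = 0 := by
  have hmem_neg : ∀ᶠ s : ℝ in 𝓝 0, q + s • (-v) ∈ S := by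
    simpa using (continuous_neg.tendsto' (0 : ℝ) 0 neg_zero).eventually hmem
  have hle := first_order_nonpos_of_eventually_le hu hφ
    (hmem.filter_mono nhdsWithin_le_nhds) ((hmem.filter_mono nhdsWithin_le_nhds).mono hmax)
  have hge := first_order_nonpos_of_eventually_le hu hφ (v := -v)
    (hmem_neg.filter_mono nhdsWithin_le_nhds)
    ((hmem_neg.filter_mono nhdsWithin_le_nhds).mono fun s hs => by
      simpa using hmax (-s) (by simpa using hs))
  rw [dirDeriv_neg_dir, map_neg] at hge
  linarith

lemma second_order_nonpos_of_isLocalMax_line (hu : ContDiffOn ℝ 2 u S) (hS : UniqueDiffOn ℝ S)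
    (hq : S ∈ 𝓝 q) (hφ : ContDiff ℝ 2 φ) (hφ_pos : 0 < φ (ℓ q))
    (hmax : IsLocalMax (fun s : ℝ => u (q + s • v) ^ 2 * φ (ℓ (q + s • v))) 0) :
    2 * φ (ℓ q) * (u q * dirDeriv S v (dirDeriv S v u) q)
      + (deriv (deriv φ) (ℓ q) - 2 * deriv φ (ℓ q) ^ 2 / φ (ℓ q)) * u q ^ 2 * ℓ v ^ 2 ≤ 0 := by
  have hu' := contDiffOn_dirDeriv hu hS (m := 1) one_add_one_eq_two.le v
  have hφ' : ContDiff ℝ 1 (deriv φ) := (contDiff_succ_iff_deriv (n := 1)).1 hφ |>.2.2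
  have hsecond := second_order_nonpos_of_isLocalMax_sq_mul
    (eventually_hasDerivAt_line (hu.differentiableOn two_ne_zero) hq v)
    (eventually_hasDerivAt_line (hu'.differentiableOn one_ne_zero) hq v).self_of_nhds
    (Eventually.of_forall fun s =>
      hasDerivAt_comp_line (hφ.differentiable two_ne_zero (ℓ (q + s • v))).hasDerivAt)
    ((hasDerivAt_comp_line (r := 0)
      (hφ'.differentiable one_ne_zero (ℓ (q + (0 : ℝ) • v))).hasDerivAt).mul_const (ℓ v))
    (by simpa using hφ_pos) hmax
  simp only [zero_smul, add_zero] at hsecond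
  refine le_of_eq_of_le ?_ hsecond
  ring

lemma second_order_nonpos_of_isLocalMax_lines {ι : Type*} [Fintype ι] {A : ι → ι → ℝ}
    (hA : ∀ ξ : ι → ℝ, 0 ≤ ∑ i, ∑ j, A i j * ξ i * ξ j) (e : ι → V)
    (hu : ContDiffOn ℝ 2 u S) (hS : UniqueDiffOn ℝ S) (hq : S ∈ 𝓝 q)
    (hφ : ContDiff ℝ 2 φ) (hφ_pos : 0 < φ (ℓ q))
    (hmax : ∀ ξ : ι → ℝ, IsLocalMax (fun s : ℝ =>
      u (q + s • ∑ i, ξ i • e i) ^ 2 * φ (ℓ (q + s • ∑ i, ξ i • e i))) 0) :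
    ∑ i, ∑ j, A i j * (2 * φ (ℓ q) * (u q * dirDeriv S (e i) (dirDeriv S (e j) u) q)
      + (deriv (deriv φ) (ℓ q) - 2 * deriv φ (ℓ q) ^ 2 / φ (ℓ q)) * u q ^ 2
        * (ℓ (e i) * ℓ (e j))) ≤ 0 := by
  have hqS := mem_of_mem_nhds hq
  set G : ι → ι → ℝ := fun i j => 2 * φ (ℓ q) * (u q * dirDeriv S (e i) (dirDeriv S (e j) u) q)
      + (deriv (deriv φ) (ℓ q) - 2 * deriv φ (ℓ q) ^ 2 / φ (ℓ q)) * u q ^ 2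
        * (ℓ (e i) * ℓ (e j)) with hG
  have hsymm : ∀ i j, G i j = G j i := fun i j => by
    simp only [hG]
    rw [dirDeriv_comm hu hS hqS (subset_closure (mem_interior_iff_mem_nhds.2 hq)),
      mul_comm (ℓ (e i))]
  have hquad : ∀ ξ : ι → ℝ, ∑ i, ξ i * ∑ j, G i j * ξ j ≤ 0 := fun ξ => by
    refine le_of_eq_of_le ?_ (second_order_nonpos_of_isLocalMax_line hu hS hq hφ hφ_pos (hmax ξ))
    rw [dirDeriv_sum_smul_dirDeriv_sum_smul hu hS _ ξ e hqS, sq (ℓ _), map_sum,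
      Finset.sum_mul_sum]
    simp only [hG, map_smul, smul_eq_mul, Finset.mul_sum, ← Finset.sum_add_distrib]
    exact Finset.sum_congr rfl fun i _ => Finset.sum_congr rfl fun j _ => by ring
  have hposSemidef : (Matrix.of fun i j => -G i j).PosSemidef := by
    refine Matrix.PosSemidef.of_dotProduct_mulVec_nonneg (by ext i j; simp [hsymm i j])
      fun ξ => ?_
    simpa [dotProduct, Matrix.mulVec] using hquad ξ
  simpa using sum_mul_nonneg_of_posSemidef hA hposSemidef

end WeightedMaximum

section ParabolicOperator

variable {ι : Type*}

/-- The `k`-th space coordinate as a linear functional on space-time. -/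
noncomputable def spaceCoord (k : ι) : ((ι → ℝ) × ℝ) →L[ℝ] ℝ :=
  (ContinuousLinearMap.proj k).comp (ContinuousLinearMap.fst ℝ (ι → ℝ) ℝ)

@[simp]
lemma spaceCoord_apply (k : ι) (q : (ι → ℝ) × ℝ) : spaceCoord k q = q.1 k := rfl

lemma spaceCoord_ne_zero (k : ι) : spaceCoord k ≠ 0 := fun h =>
  one_ne_zero (α := ℝ) (DFunLike.congr_fun h (fun _ => 1, 0))

variable [DecidableEq ι] {i k : ι}

/-- The `i`-th unit vector of space, as a direction in space-time. -/
def spaceDir (i : ι) : (ι → ℝ) × ℝ := (Pi.single i 1, 0)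

lemma spaceCoord_spaceDir (i k : ι) : spaceCoord k (spaceDir i) = if i = k then 1 else 0 := by
  simp [spaceDir, Pi.single_apply, eq_comm]

lemma spaceCoord_spaceDir_self : spaceCoord k (spaceDir k) = 1 :=
  (spaceCoord_spaceDir k k).trans (if_pos rfl)

lemma spaceCoord_spaceDir_of_ne (h : i ≠ k) : spaceCoord k (spaceDir i) = 0 :=
  (spaceCoord_spaceDir i k).trans (if_neg h)

lemma line_spaceDir_snd (q : (ι → ℝ) × ℝ) (i : ι) (s : ℝ) : (q + s • spaceDir i).2 = q.2 := by
  simp [spaceDir]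

variable [Fintype ι]

lemma sum_mul_spaceCoord_spaceDir (B : ι → ℝ) (k : ι) :
    ∑ i, B i * spaceCoord k (spaceDir i) = B k := by
  simp only [spaceCoord_spaceDir, mul_ite, mul_one, mul_zero, Finset.sum_ite_eq',
    Finset.mem_univ, if_true]

lemma sum_sum_mul_spaceCoord_spaceDir (A : ι → ι → ℝ) (k : ι) :
    ∑ i, ∑ j, A i j * (spaceCoord k (spaceDir i) * spaceCoord k (spaceDir j)) = A k k := by
  simp only [spaceCoord_spaceDir, mul_ite, mul_one, mul_zero, Finset.sum_ite_eq',
    Finset.mem_univ, if_true]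

/-- The parabolic operator `∂ₜ - Σ Aᵢⱼ ∂ᵢ∂ⱼ + Σ Bᵢ ∂ᵢ + C` with constant coefficients and with
derivatives taken within `S`. An operator with coefficients depending on time is applied at a given
time by freezing its coefficients there. -/
noncomputable def parabolicWithin (S : Set ((ι → ℝ) × ℝ)) (A : ι → ι → ℝ) (B : ι → ℝ) (C : ℝ)
    (f : (ι → ℝ) × ℝ → ℝ) (q : (ι → ℝ) × ℝ) : ℝ :=
  dirDeriv S (0, 1) f q
    - ∑ i, ∑ j, A i j * dirDeriv S (spaceDir i) (dirDeriv S (spaceDir j) f) q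
    + ∑ i, B i * dirDeriv S (spaceDir i) f q
    + C * f q

variable {S : Set ((ι → ℝ) × ℝ)} {A : ι → ι → ℝ} {B : ι → ℝ} {C : ℝ}
  {f : (ι → ℝ) × ℝ → ℝ} {q : (ι → ℝ) × ℝ}

lemma contDiffOn_parabolicWithin {m n : ℕ∞ω} (hf : ContDiffOn ℝ n f S) (hS : UniqueDiffOn ℝ S)
    (hmn : m + 1 + 1 ≤ n) : ContDiffOn ℝ m (parabolicWithin S A B C f) S := by
  have hm : m + 1 ≤ n := le_self_add.trans hmn
  have hfirst := fun v => contDiffOn_dirDeriv hf hS hm v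
  have hsecond := fun v w =>
    contDiffOn_dirDeriv (contDiffOn_dirDeriv hf hS hmn w) hS le_rfl v
  refine (((hfirst _).sub ?_).add ?_).add ?_
  · exact ContDiffOn.sum fun i _ => ContDiffOn.sum fun j _ => contDiffOn_const.mul (hsecond _ _)
  · exact ContDiffOn.sum fun i _ => contDiffOn_const.mul (hfirst _)
  · exact contDiffOn_const.mul (hf.of_le (le_self_add.trans hm))

lemma dirDeriv_parabolicWithin (hf : ContDiffOn ℝ 3 f S) (hS : UniqueDiffOn ℝ S)
    (hcl : S ⊆ closure (interior S)) (v : (ι → ℝ) × ℝ) (hq : q ∈ S) :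
    dirDeriv S v (parabolicWithin S A B C f) q = parabolicWithin S A B C (dirDeriv S v f) q := by
  have hf' := fun w => contDiffOn_dirDeriv hf hS (m := 2) two_add_one_eq_three.le w
  have hf'' := fun w z => contDiffOn_dirDeriv (hf' z) hS (m := 1) one_add_one_eq_two.le w
  have hfirst := fun w => ((hf' w).differentiableOn two_ne_zero q hq).hasFDerivWithinAt
  have hsecond := fun w z => ((hf'' w z).differentiableOn one_ne_zero q hq).hasFDerivWithinAt
  have hzeroth := (hf.differentiableOn three_ne_zero q hq).hasFDerivWithinAt
  have htotal := (((hfirst (0, 1)).sub (HasFDerivWithinAt.fun_sum (u := Finset.univ) fun i _ =>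
      HasFDerivWithinAt.fun_sum (u := Finset.univ) fun j _ =>
        (hsecond (spaceDir i) (spaceDir j)).const_mul (A i j))).add
      (HasFDerivWithinAt.fun_sum (u := Finset.univ) fun i _ =>
        (hfirst (spaceDir i)).const_mul (B i))).add (hzeroth.const_mul C)
  have hexpand : dirDeriv S v (parabolicWithin S A B C f) q
      = dirDeriv S v (dirDeriv S (0, 1) f) q
        - ∑ i, ∑ j, A i j
            * dirDeriv S v (dirDeriv S (spaceDir i) (dirDeriv S (spaceDir j) f)) q
        + ∑ i, B i * dirDeriv S v (dirDeriv S (spaceDir i) f) q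
        + C * dirDeriv S v f q := by
    have happly := DFunLike.congr_fun (htotal.fderivWithin (hS q hq)) v
    simp only [add_apply, sub_apply, sum_apply, smul_apply, smul_eq_mul] at happly
    exact happly
  have hf2 : ContDiffOn ℝ 2 f S := hf.of_le (by norm_num)
  have hcomm_first : ∀ w, dirDeriv S v (dirDeriv S w f) q = dirDeriv S w (dirDeriv S v f) q :=
    fun w => dirDeriv_comm hf2 hS hq (hcl hq) v w
  have hcomm_second : ∀ w z, dirDeriv S v (dirDeriv S w (dirDeriv S z f)) q
      = dirDeriv S w (dirDeriv S z (dirDeriv S v f)) q := fun w z => by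
    rw [dirDeriv_comm (hf' z) hS hq (hcl hq)]
    exact dirDeriv_congr (fun y hy => dirDeriv_comm hf2 hS hy (hcl hy) v z) hq w
  rw [hexpand]
  simp only [hcomm_first, hcomm_second, parabolicWithin]

lemma parabolicWithin_dirDeriv_spaceDir_eq_zero (hf : ContDiffOn ℝ 3 f S) (hS : UniqueDiffOn ℝ S)
    (hcl : S ⊆ closure (interior S)) (hq : S ∈ 𝓝 q) (k : ι)
    (hpde : ∀ y ∈ S, y.2 = q.2 → parabolicWithin S A B C f y = 0) :
    parabolicWithin S A B C (dirDeriv S (spaceDir k) f) q = 0 := by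
  have hqS := mem_of_mem_nhds hq
  have hdiff := (contDiffOn_parabolicWithin (A := A) (B := B) (C := C) hf hS (m := 1)
    (by norm_num)).differentiableOn one_ne_zero q hqS
  rw [← dirDeriv_parabolicWithin hf hS hcl _ hqS]
  exact dirDeriv_eq_zero_of_line hdiff
    (uniqueDiffWithinAt_of_mem_nhds (tendsto_line q (spaceDir k) hq)) hqS
    fun s hs => hpde _ hs (line_spaceDir_snd q k s)

lemma parabolicWithin_halfRegion_eq_zero {U : Set ((ι → ℝ) × ℝ)} {β : ℝ} (hU : IsOpen U)
    (hf : ContDiffOn ℝ 2 f (halfRegion U (spaceCoord k) β))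
    (hpde : ∀ y ∈ U, y.1 k < β → y.2 = q.2 →
      parabolicWithin (halfRegion U (spaceCoord k) β) A B C f y = 0)
    (hq : q ∈ halfRegion U (spaceCoord k) β) :
    parabolicWithin (halfRegion U (spaceCoord k) β) A B C f q = 0 := by
  have hcont := (contDiffOn_parabolicWithin (A := A) (B := B) (C := C) hf
    (uniqueDiffOn_halfRegion hU (spaceCoord_ne_zero k)) (m := 0) (by norm_num)).continuousOn
  refine eq_zero_of_inward_line hU hcont hq (v := -spaceDir k) ?_ fun s hs =>
    hpde _ hs.1 hs.2 (by simp [spaceDir])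
  simp only [map_neg, spaceCoord_spaceDir_self, neg_one_lt_zero]

lemma coeff_mul_normal_dirDeriv_eq_of_face {U : Set ((ι → ℝ) × ℝ)} {β : ℝ} (hU : IsOpen U)
    (hS_eq : S = halfRegion U (spaceCoord k) β) (hf : ContDiffOn ℝ 2 f S)
    (hface : ∀ y ∈ S, y.1 k = β → f y = 0) (hq : q ∈ S) (hqβ : q.1 k = β)
    (hpde : parabolicWithin S A B C f q = 0)
    (htan : ∀ i ≠ k, dirDeriv S (spaceDir i) (dirDeriv S (spaceDir k) f) q = 0) :
    A k k * dirDeriv S (spaceDir k) (dirDeriv S (spaceDir k) f) q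
      = B k * dirDeriv S (spaceDir k) f q := by
  have hS : UniqueDiffOn ℝ S := hS_eq ▸ uniqueDiffOn_halfRegion hU (spaceCoord_ne_zero k)
  have hcl : S ⊆ closure (interior S) :=
    hS_eq ▸ halfRegion_subset_closure_interior hU (spaceCoord_ne_zero k)
  have hvanish : ∀ g : (ι → ℝ) × ℝ → ℝ, DifferentiableOn ℝ g S →
      (∀ y ∈ S, y.1 k = β → g y = 0) → ∀ v, spaceCoord k v = 0 →
      ∀ y ∈ S, y.1 k = β → dirDeriv S v g y = 0 := by
    subst hS_eq
    exact fun g hg hg0 v hv y hy hyβ => dirDeriv_eq_zero_of_tangential hU hg hg0 hv hy hyβ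
  have htime : dirDeriv S (0, 1) f q = 0 :=
    hvanish f (hf.differentiableOn two_ne_zero) hface _ (by simp) q hq hqβ
  have hfirst : ∀ i ≠ k, ∀ y ∈ S, y.1 k = β → dirDeriv S (spaceDir i) f y = 0 := fun i hi =>
    hvanish f (hf.differentiableOn two_ne_zero) hface _ (spaceCoord_spaceDir_of_ne hi)
  have hsecond : ∀ i j, i ≠ k ∨ j ≠ k →
      dirDeriv S (spaceDir i) (dirDeriv S (spaceDir j) f) q = 0 := by
    intro i j hij
    rcases eq_or_ne j k with rfl | hj
    · exact htan i (by simpa using hij)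
    rcases eq_or_ne i k with rfl | hi
    · rw [dirDeriv_comm hf hS hq (hcl hq)]
      exact htan j hj
    · exact hvanish _
        ((contDiffOn_dirDeriv hf hS (m := 1) one_add_one_eq_two.le _).differentiableOn one_ne_zero)
        (hfirst j hj) _ (spaceCoord_spaceDir_of_ne hi) q hq hqβ
  have hdrift : ∑ i, B i * dirDeriv S (spaceDir i) f q = B k * dirDeriv S (spaceDir k) f q :=
    Fintype.sum_eq_single k fun i hi => by rw [hfirst i hi q hq hqβ, mul_zero]
  have hdiffusion : ∑ i, ∑ j, A i j * dirDeriv S (spaceDir i) (dirDeriv S (spaceDir j) f) q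
      = A k k * dirDeriv S (spaceDir k) (dirDeriv S (spaceDir k) f) q := by
    rw [Fintype.sum_eq_single k fun i hi => Finset.sum_eq_zero fun j _ => by
      rw [hsecond i j (Or.inl hi), mul_zero]]
    exact Fintype.sum_eq_single k fun j hj => by rw [hsecond k j (Or.inr hj), mul_zero]
  rw [parabolicWithin, htime, hdrift, hdiffusion, hface q hq hqβ] at hpde
  linarith

end ParabolicOperator

section InteriorAndFaceMaxima

variable {ι : Type*}

/-- The quantity `u² φ(x_k) ϕ(t)` to which the maximum principle is applied. -/
def weightedSq (k : ι) (φ ϕ : ℝ → ℝ) (u : (ι → ℝ) × ℝ → ℝ) (q : (ι → ℝ) × ℝ) : ℝ :=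
  u q ^ 2 * φ (q.1 k) * ϕ q.2

/-- The growth rate of `u² φ(x_k)` at a spatial maximum: the coefficient of `u²` that is left of
`2 u ∂ₜu` in the equation `∂ₜu = Σ Aᵢⱼ ∂ᵢ∂ⱼu - Σ Bᵢ ∂ᵢu - C u` once the derivatives of `u` are
eliminated with the first- and second-order conditions. Here `α`, `b` stand for `A_kk`, `B_k`. -/
noncomputable def growthRate (φ : ℝ → ℝ) (α b C r : ℝ) : ℝ :=
  2 * α * (deriv φ r / φ r) ^ 2 - α * (deriv (deriv φ) r / φ r) + b * (deriv φ r / φ r) - 2 * C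

variable {k : ι} {S : Set ((ι → ℝ) × ℝ)} {u : (ι → ℝ) × ℝ → ℝ} {φ ϕ : ℝ → ℝ} {η : ℝ}
  {q : (ι → ℝ) × ℝ}

lemma weightedSq_nonneg (hφ : 0 ≤ φ (q.1 k)) (hϕ : 0 ≤ ϕ q.2) : 0 ≤ weightedSq k φ ϕ u q :=
  mul_nonneg (mul_nonneg (sq_nonneg _) hφ) hϕ

lemma continuousOn_weightedSq (hu : ContinuousOn u S) (hφ : Continuous φ) (hϕ : Continuous ϕ) :
    ContinuousOn (weightedSq k φ ϕ u) S :=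
  ((hu.pow 2).mul (by fun_prop)).mul (by fun_prop)

lemma sq_mul_le_of_isMaxOn_weightedSq (hϕ_pos : 0 < ϕ q.2)
    (hmax : IsMaxOn (fun y => weightedSq k φ ϕ u y - η * y.2) (S ∩ {y | y.2 ≤ q.2}) q) :
    ∀ y ∈ S, y.2 = q.2 → u y ^ 2 * φ (y.1 k) ≤ u q ^ 2 * φ (q.1 k) := by
  intro y hy hyq
  have hle : weightedSq k φ ϕ u y - η * y.2 ≤ weightedSq k φ ϕ u q - η * q.2 :=
    hmax ⟨hy, hyq.le⟩
  rw [weightedSq, weightedSq, hyq] at hle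
  exact le_of_mul_le_mul_right (by linarith) hϕ_pos

variable [Fintype ι]

lemma le_time_dirDeriv_weightedSq_of_isMaxOn (hu : DifferentiableWithinAt ℝ u S q) (hq : S ∈ 𝓝 q)
    (hϕ : DifferentiableAt ℝ ϕ q.2)
    (hmax : IsMaxOn (fun y => weightedSq k φ ϕ u y - η * y.2) (S ∩ {y | y.2 ≤ q.2}) q) :
    η ≤ (2 * u q * dirDeriv S (0, 1) u q * ϕ q.2 + u q ^ 2 * deriv ϕ q.2) * φ (q.1 k) := by
  have hmem : ∀ᶠ s : ℝ in 𝓝[>] 0, q + s • (-(0, 1) : (ι → ℝ) × ℝ) ∈ S :=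
    ((tendsto_line q _).mono_left nhdsWithin_le_nhds) hq
  have htime : HasDerivAt (fun s : ℝ => q.2 - s) (-1) 0 := (hasDerivAt_id _).const_sub q.2
  have hϕ_line : HasDerivAt (fun s : ℝ => ϕ (q.2 - s)) (deriv ϕ q.2 * -1) 0 :=
    HasDerivAt.comp 0 (by simpa using hϕ.hasDerivAt) htime
  have hderiv := ((((hasDerivWithinAt_Ioi_line hu hmem).pow 2).mul_const (φ (q.1 k))).mul
    hϕ_line.hasDerivWithinAt).sub (htime.hasDerivWithinAt.const_mul η)
  have hnonpos := nonpos_of_hasDerivWithinAt_Ioi_of_eventually_le hderiv (by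
    filter_upwards [hmem, self_mem_nhdsWithin] with s hs hs0
    have hs0' : 0 < s := hs0
    simpa [weightedSq, sub_eq_add_neg, Prod.mk_zero_zero] using hmax ⟨hs, by simp [hs0'.le]⟩)
  rw [dirDeriv_neg_dir] at hnonpos
  simp only [Nat.cast_ofNat, Prod.neg_mk, neg_zero, zero_smul, add_zero, Nat.add_one_sub_one,
    pow_one, mul_neg, neg_mul, sub_zero, Prod.smul_mk, smul_zero, smul_eq_mul, mul_one,
    Pi.pow_apply, Prod.mk_zero_zero, sub_neg_eq_add] at hnonpos
  linarith

variable [DecidableEq ι] {i : ι} {A : ι → ι → ℝ} {B : ι → ℝ} {C : ℝ}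

lemma dirDeriv_spaceDir_eq_zero_of_spatial_max (hi : i ≠ k) (hu : DifferentiableWithinAt ℝ u S q)
    (hmem : ∀ᶠ s : ℝ in 𝓝 0, q + s • spaceDir i ∈ S) (hφ : DifferentiableAt ℝ φ (q.1 k))
    (hφ_pos : 0 < φ (q.1 k)) (hu_ne : u q ≠ 0)
    (hmax : ∀ y ∈ S, y.2 = q.2 → u y ^ 2 * φ (y.1 k) ≤ u q ^ 2 * φ (q.1 k)) :
    dirDeriv S (spaceDir i) u q = 0 := by
  have hzero := first_order_eq_zero_of_line_max (ℓ := spaceCoord k) hu hφ hmem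
    fun s hs => hmax _ hs (line_spaceDir_snd q i s)
  rw [spaceCoord_spaceDir_of_ne hi, spaceCoord_apply] at hzero
  simpa [hφ_pos.ne', hu_ne] using hzero

lemma two_mul_time_dirDeriv_le_of_spatial_max
    (hA : ∀ ξ : ι → ℝ, 0 ≤ ∑ i, ∑ j, A i j * ξ i * ξ j)
    (hu : ContDiffOn ℝ 2 u S) (hS : UniqueDiffOn ℝ S) (hq : S ∈ 𝓝 q)
    (hφ : ContDiff ℝ 2 φ) (hφ_pos : 0 < φ (q.1 k))
    (hmax : ∀ y ∈ S, y.2 = q.2 → u y ^ 2 * φ (y.1 k) ≤ u q ^ 2 * φ (q.1 k))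
    (hpde : parabolicWithin S A B C u q = 0) :
    2 * u q * dirDeriv S (0, 1) u q ≤ u q ^ 2 * growthRate φ (A k k) (B k) C (q.1 k) := by
  have hdiffusion := second_order_nonpos_of_isLocalMax_lines hA spaceDir (ℓ := spaceCoord k)
    hu hS hq hφ hφ_pos fun ξ => by
      filter_upwards [tendsto_line q (∑ i, ξ i • spaceDir i) hq] with s hs
      simpa using hmax _ hs (by simp [spaceDir, Prod.snd_sum])
  have hdrift : ∀ i, 2 * φ (q.1 k) * (u q * dirDeriv S (spaceDir i) u q)
      + u q ^ 2 * (deriv φ (q.1 k) * spaceCoord k (spaceDir i)) = 0 := fun i =>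
    first_order_eq_zero_of_line_max (ℓ := spaceCoord k)
      (hu.differentiableOn two_ne_zero q (mem_of_mem_nhds hq))
      (hφ.differentiable two_ne_zero _) (tendsto_line q _ hq)
      fun s hs => hmax _ hs (line_spaceDir_snd q i s)
  have hdrift_sum : 2 * φ (q.1 k) * (u q * ∑ i, B i * dirDeriv S (spaceDir i) u q)
      + u q ^ 2 * (deriv φ (q.1 k) * B k) = 0 := by
    rw [← sum_mul_spaceCoord_spaceDir B k, ← Finset.sum_eq_zero fun i (_ : i ∈ Finset.univ) =>
      mul_eq_zero_of_right (B i) (hdrift i)]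
    simp only [Finset.mul_sum, ← Finset.sum_add_distrib]
    exact Finset.sum_congr rfl fun i _ => by ring
  have hdiffusion_sum : 2 * φ (q.1 k)
        * (u q * ∑ i, ∑ j, A i j * dirDeriv S (spaceDir i) (dirDeriv S (spaceDir j) u) q)
      + (deriv (deriv φ) (q.1 k) - 2 * deriv φ (q.1 k) ^ 2 / φ (q.1 k)) * u q ^ 2 * A k k ≤ 0 := by
    rw [← sum_sum_mul_spaceCoord_spaceDir A k]
    refine le_of_eq_of_le ?_ hdiffusion
    simp only [Finset.mul_sum, ← Finset.sum_add_distrib]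
    exact Finset.sum_congr rfl fun i _ => Finset.sum_congr rfl fun j _ => by
      rw [spaceCoord_apply k q]
      ring
  refine le_of_mul_le_mul_left ?_ hφ_pos
  calc φ (q.1 k) * (2 * u q * dirDeriv S (0, 1) u q)
      ≤ -((deriv (deriv φ) (q.1 k) - 2 * deriv φ (q.1 k) ^ 2 / φ (q.1 k)) * u q ^ 2 * A k k)
        + u q ^ 2 * (deriv φ (q.1 k) * B k) - 2 * φ (q.1 k) * C * u q ^ 2 := by
        rw [parabolicWithin] at hpde
        linear_combination hdiffusion_sum - hdrift_sum + 2 * φ (q.1 k) * u q * hpde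
    _ = φ (q.1 k) * (u q ^ 2 * growthRate φ (A k k) (B k) C (q.1 k)) := by
        rw [growthRate]
        field_simp
        ring

lemma not_isMaxOn_weightedSq_of_mem_nhds
    (hA : ∀ ξ : ι → ℝ, 0 ≤ ∑ i, ∑ j, A i j * ξ i * ξ j) (hu : ContDiffOn ℝ 2 u S)
    (hS : UniqueDiffOn ℝ S) (hq : S ∈ 𝓝 q) (hpde : parabolicWithin S A B C u q = 0)
    (hφ : ContDiff ℝ 2 φ) (hφ_pos : 0 < φ (q.1 k))
    (hϕ : DifferentiableAt ℝ ϕ q.2) (hϕ_pos : 0 < ϕ q.2)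
    (hrate : growthRate φ (A k k) (B k) C (q.1 k) + deriv ϕ q.2 / ϕ q.2 ≤ 0) (hη : 0 < η) :
    ¬ IsMaxOn (fun y => weightedSq k φ ϕ u y - η * y.2) (S ∩ {y | y.2 ≤ q.2}) q := by
  intro hmax
  have hspace := two_mul_time_dirDeriv_le_of_spatial_max hA hu hS hq hφ hφ_pos
    (sq_mul_le_of_isMaxOn_weightedSq hϕ_pos hmax) hpde
  have htime := le_time_dirDeriv_weightedSq_of_isMaxOn
    (hu.differentiableOn two_ne_zero q (mem_of_mem_nhds hq)) hq hϕ hmax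
  refine hη.not_ge (htime.trans ?_)
  calc (2 * u q * dirDeriv S (0, 1) u q * ϕ q.2 + u q ^ 2 * deriv ϕ q.2) * φ (q.1 k)
      ≤ (u q ^ 2 * growthRate φ (A k k) (B k) C (q.1 k) * ϕ q.2 + u q ^ 2 * deriv ϕ q.2)
        * φ (q.1 k) := by gcongr
    _ = u q ^ 2 * φ (q.1 k) * ϕ q.2
        * (growthRate φ (A k k) (B k) C (q.1 k) + deriv ϕ q.2 / ϕ q.2) := by
        field_simp
    _ ≤ 0 := mul_nonpos_of_nonneg_of_nonpos (by positivity) hrate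

section HalfRegion

variable {U : Set ((ι → ℝ) × ℝ)} {f : (ι → ℝ) × ℝ → ℝ} {β : ℝ}

/-- At a nonzero maximum on the face, the normal derivative of `∂_k f` is controlled from below by
the first-order condition, while the equation, all of whose tangential terms vanish, prescribes it;
the sign condition makes the two incompatible. -/
lemma dirDeriv_eq_zero_of_face_max (hU : IsOpen U)
    (hS_eq : S = halfRegion U (spaceCoord k) β) (hf : ContDiffOn ℝ 2 f S)
    (hface : ∀ y ∈ S, y.1 k = β → f y = 0) (hq : q ∈ S) (hqβ : q.1 k = β)
    (hpde : parabolicWithin S A B C f q = 0) (hA_pos : 0 < A k k)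
    (hφ : DifferentiableAt ℝ φ β) (hφ_pos : 0 < φ β)
    (hsign : 2 * B k / A k k + deriv φ β / φ β < 0)
    (hmax : ∀ y ∈ S, y.2 = q.2 → dirDeriv S (spaceDir k) f y ^ 2 * φ (y.1 k)
      ≤ dirDeriv S (spaceDir k) f q ^ 2 * φ (q.1 k)) :
    dirDeriv S (spaceDir k) f q = 0 := by
  set u := dirDeriv S (spaceDir k) f with hu_def
  by_contra hu_ne
  subst hqβ
  have hS : UniqueDiffOn ℝ S := hS_eq ▸ uniqueDiffOn_halfRegion hU (spaceCoord_ne_zero k)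
  have hq' : q ∈ halfRegion U (spaceCoord k) (q.1 k) := hS_eq ▸ hq
  have hu : DifferentiableWithinAt ℝ u S q :=
    (contDiffOn_dirDeriv hf hS (m := 1) one_add_one_eq_two.le _).differentiableOn one_ne_zero q hq
  have htan : ∀ i ≠ k, dirDeriv S (spaceDir i) u q = 0 := fun i hi =>
    dirDeriv_spaceDir_eq_zero_of_spatial_max hi hu
      (hS_eq ▸ eventually_line_mem_of_tangential hU hq' (spaceCoord_spaceDir_of_ne hi))
      hφ hφ_pos hu_ne hmax
  have hrel := coeff_mul_normal_dirDeriv_eq_of_face hU hS_eq hf hface hq rfl hpde htan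
  rw [← hu_def] at hrel
  have hinward : ∀ᶠ s : ℝ in 𝓝[>] 0, q + s • (-spaceDir k) ∈ S := by
    filter_upwards [eventually_line_mem_of_inward hU hq' (v := -spaceDir k) (by
      rw [map_neg, spaceCoord_spaceDir_self]; exact neg_one_lt_zero)] with s hs
    exact hS_eq ▸ inter_preimage_Iio_subset_halfRegion hs
  have hnormal := first_order_nonpos_of_eventually_le (ℓ := spaceCoord k) hu hφ hinward
    (hinward.mono fun s hs => hmax _ hs (by simp [spaceDir]))
  rw [dirDeriv_neg_dir, map_neg, spaceCoord_spaceDir_self, spaceCoord_apply] at hnormal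
  have hneg : u q ^ 2 * φ (q.1 k)
      * (2 * B k / A k k + deriv φ (q.1 k) / φ (q.1 k)) < 0 :=
    mul_neg_of_pos_of_neg (by positivity) hsign
  have hfactor : u q ^ 2 * φ (q.1 k) * (2 * B k / A k k + deriv φ (q.1 k) / φ (q.1 k))
      = 2 * φ (q.1 k) * (u q * dirDeriv S (spaceDir k) u q)
        + u q ^ 2 * deriv φ (q.1 k) := by
    field_simp
    linear_combination (-2 * φ (q.1 k)) * hrel
  linarith

lemma dirDeriv_eq_zero_of_isMaxOn_weightedSq (hU : IsOpen U)
    (hS_eq : S = halfRegion U (spaceCoord k) β) (hf : ContDiffOn ℝ 3 f S)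
    (hface : ∀ y ∈ S, y.1 k = β → f y = 0) (hq : q ∈ S)
    (hpde : ∀ y ∈ U, y.1 k < β → y.2 = q.2 → parabolicWithin S A B C f y = 0)
    (hA : ∀ ξ : ι → ℝ, 0 ≤ ∑ i, ∑ j, A i j * ξ i * ξ j) (hA_pos : 0 < A k k)
    (hφ : ContDiff ℝ 2 φ) (hφ_pos : ∀ r, 0 < φ r)
    (hsign : 2 * B k / A k k + deriv φ β / φ β < 0)
    (hϕ : DifferentiableAt ℝ ϕ q.2) (hϕ_pos : 0 < ϕ q.2)
    (hrate : growthRate φ (A k k) (B k) C (q.1 k) + deriv ϕ q.2 / ϕ q.2 ≤ 0) (hη : 0 < η)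
    (hmax : IsMaxOn (fun y => weightedSq k φ ϕ (dirDeriv S (spaceDir k) f) y - η * y.2)
      (S ∩ {y | y.2 ≤ q.2}) q) :
    dirDeriv S (spaceDir k) f q = 0 := by
  subst hS_eq
  have hf2 := hf.of_le (show (2 : ℕ∞ω) ≤ 3 by norm_num)
  have hpde_face : ∀ y ∈ halfRegion U (spaceCoord k) β, y.2 = q.2 →
      parabolicWithin (halfRegion U (spaceCoord k) β) A B C f y = 0 := fun y hy hyq =>
    parabolicWithin_halfRegion_eq_zero hU hf2 (fun z hz hzβ hzy => hpde z hz hzβ (hzy.trans hyq)) hy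
  rcases (show q.1 k ≤ β from hq.2).lt_or_eq with hlt | hqβ
  · have hnhds := halfRegion_mem_nhds (ℓ := spaceCoord k) hU hq.1 hlt
    have hS := uniqueDiffOn_halfRegion (β := β) hU (spaceCoord_ne_zero k)
    have hcl := halfRegion_subset_closure_interior (β := β) hU (spaceCoord_ne_zero k)
    exact absurd hmax (not_isMaxOn_weightedSq_of_mem_nhds hA
      (contDiffOn_dirDeriv hf hS two_add_one_eq_three.le _) hS hnhds
      (parabolicWithin_dirDeriv_spaceDir_eq_zero hf hS hcl hnhds k hpde_face)
      hφ (hφ_pos _) hϕ hϕ_pos hrate hη)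
  · exact dirDeriv_eq_zero_of_face_max hU rfl hf2 hface hq hqβ (hpde_face q hq rfl) hA_pos
      (hφ.differentiable two_ne_zero β) (hφ_pos β) hsign
      (sq_mul_le_of_isMaxOn_weightedSq hϕ_pos hmax)

end HalfRegion

end InteriorAndFaceMaxima

lemma exists_abs_add_const_mul_le {f g : ℝ → ℝ} (hf : ∃ C, ∀ t, |f t| ≤ C)
    (hg : ∃ C, ∀ t, |g t| ≤ C) (k : ℝ) : ∃ C, ∀ t, |f t + k * g t| ≤ C := by
  obtain ⟨Cf, hf⟩ := hf
  obtain ⟨Cg, hg⟩ := hg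
  refine ⟨Cf + |k| * Cg, fun t => (abs_add_le _ _).trans (add_le_add (hf t) ?_)⟩
  rw [abs_mul]
  exact mul_le_mul_of_nonneg_left (hg t) (abs_nonneg k)

lemma abs_le_iSup_abs {f : ℝ → ℝ} (hf : ∃ C, ∀ t, |f t| ≤ C) (t : ℝ) : |f t| ≤ ⨆ s, |f s| :=
  le_ciSup (f := fun s => |f s|) (hf.imp fun _ hC => forall_mem_range.2 hC) t

section TransformedOperator

variable {m : ℕ} {S : Set ((Fin m → ℝ) × ℝ)} {f : (Fin m → ℝ) × ℝ → ℝ} {x : Fin m → ℝ} {t : ℝ}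

lemma pd1_eq_dirDeriv (hf : DifferentiableWithinAt ℝ f S (x, t)) (hq : S ∈ 𝓝 (x, t))
    (i : Fin m) : pd1 i (fun y => f (y, t)) x = dirDeriv S (spaceDir i) f (x, t) := by
  have hslice : HasFDerivAt (fun y => f (y, t))
      ((fderivWithin ℝ f S (x, t)).comp (ContinuousLinearMap.inl ℝ (Fin m → ℝ) ℝ)) x :=
    (hf.hasFDerivWithinAt.hasFDerivAt hq).comp (f := fun y => (y, t)) x
      (hasFDerivAt_prodMk_left x t)
  rw [pd1, hslice.fderiv]
  rfl

lemma pd2_eq_dirDeriv (hf : ContDiffOn ℝ 2 f S) (hS : UniqueDiffOn ℝ S) (hq : S ∈ 𝓝 (x, t))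
    (i j : Fin m) : pd2 i j (fun y => f (y, t)) x
      = dirDeriv S (spaceDir i) (dirDeriv S (spaceDir j) f) (x, t) := by
  have hslice : (fun y => pd1 j (fun z => f (z, t)) y) =ᶠ[𝓝 x]
      fun y => dirDeriv S (spaceDir j) f (y, t) := by
    filter_upwards [((Continuous.prodMk_left t).tendsto x).eventually
      (eventually_mem_nhds_iff.2 hq)] with y hy
    exact pd1_eq_dirDeriv (hf.differentiableOn two_ne_zero _ (mem_of_mem_nhds hy)) hy j
  rw [pd2, pd1, hslice.fderiv_eq, ← pd1]
  exact pd1_eq_dirDeriv ((contDiffOn_dirDeriv hf hS (m := 1) one_add_one_eq_two.le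
    _).differentiableOn one_ne_zero _ (mem_of_mem_nhds hq)) hq i

lemma deriv_slice_eq_dirDeriv (hf : DifferentiableWithinAt ℝ f S (x, t)) (hq : S ∈ 𝓝 (x, t)) :
    deriv (fun s => f (x, s)) t = dirDeriv S (0, 1) f (x, t) :=
  ((hf.hasFDerivWithinAt.hasFDerivAt hq).comp_hasDerivAt t
    ((hasDerivAt_const t x).prodMk (hasDerivAt_id t))).deriv

variable {n : ℕ}

/-- The drift coefficients `2p aᵢₙ + bᵢ` of the transformed operator `𝒫ₚ`. -/
def transDrift (p : ℝ) (a : Fin (n + 1) → Fin (n + 1) → ℝ → ℝ) (b : Fin (n + 1) → ℝ → ℝ)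
    (t : ℝ) (i : Fin (n + 1)) : ℝ :=
  2 * p * a i (Fin.last n) t + b i t

/-- The zeroth-order coefficient `c - p bₙ - p² aₙₙ` of the transformed operator `𝒫ₚ`. -/
def transPotential (p : ℝ) (a : Fin (n + 1) → Fin (n + 1) → ℝ → ℝ) (b : Fin (n + 1) → ℝ → ℝ)
    (c : ℝ → ℝ) (t : ℝ) : ℝ :=
  c t - p * b (Fin.last n) t - p ^ 2 * a (Fin.last n) (Fin.last n) t

lemma two_mul_transDrift_last_div {p : ℝ} {a : Fin (n + 1) → Fin (n + 1) → ℝ → ℝ}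
    {b : Fin (n + 1) → ℝ → ℝ} (ha : a (Fin.last n) (Fin.last n) t ≠ 0) :
    2 * transDrift p a b t (Fin.last n) / a (Fin.last n) (Fin.last n) t
      = 4 * p + 2 * b (Fin.last n) t / a (Fin.last n) (Fin.last n) t := by
  rw [transDrift]
  field_simp
  ring

lemma transOp_eq_parabolicWithin {S : Set ((Fin (n + 1) → ℝ) × ℝ)}
    {ε : (Fin (n + 1) → ℝ) → ℝ → ℝ} {x : Fin (n + 1) → ℝ} (p : ℝ)
    (a : Fin (n + 1) → Fin (n + 1) → ℝ → ℝ) (b : Fin (n + 1) → ℝ → ℝ) (c : ℝ → ℝ)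
    (hε : ContDiffOn ℝ 2 (fun q : (Fin (n + 1) → ℝ) × ℝ => ε q.1 q.2) S) (hS : UniqueDiffOn ℝ S)
    (hq : S ∈ 𝓝 (x, t)) :
    transOp p a b c ε x t = parabolicWithin S (fun i j => a i j t) (transDrift p a b t)
      (transPotential p a b c t) (fun q => ε q.1 q.2) (x, t) := by
  have hdiff := hε.differentiableOn two_ne_zero _ (mem_of_mem_nhds hq)
  have htime : deriv (fun s => ε x s) t = _ := deriv_slice_eq_dirDeriv hdiff hq
  have hfirst : ∀ i, pd1 i (fun y => ε y t) x = _ := pd1_eq_dirDeriv hdiff hq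
  have hsecond : ∀ i j, pd2 i j (fun y => ε y t) x = _ := pd2_eq_dirDeriv hε hS hq
  have hdrift := Finset.sum_erase_add Finset.univ
    (fun i => transDrift p a b t i * dirDeriv S (spaceDir i) (fun q => ε q.1 q.2) (x, t))
    (Finset.mem_univ (Fin.last n))
  rw [transOp, parabolicWithin, ← hdrift]
  simp only [htime, hfirst, hsecond, transDrift, transPotential, add_assoc]

lemma growthRate_le {φ : ℝ → ℝ} {α b C r α₀ b₀ C₀ r₁ r₂ : ℝ} (hα : |α| ≤ α₀) (hb : |b| ≤ b₀)
    (hC : |C| ≤ C₀) (hr₁ : |deriv φ r / φ r| ≤ r₁) (hr₂ : |deriv (deriv φ) r / φ r| ≤ r₂) :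
    growthRate φ α b C r ≤ α₀ * r₂ + 2 * α₀ * r₁ ^ 2 + 2 * C₀ + b₀ * r₁ := by
  have hα₀ := (abs_nonneg α).trans hα
  have hb₀ := (abs_nonneg b).trans hb
  have hsq : α * (deriv φ r / φ r) ^ 2 ≤ α₀ * r₁ ^ 2 :=
    (le_abs_self _).trans (by rw [abs_mul, abs_pow]; gcongr)
  have hsecond : -(α * (deriv (deriv φ) r / φ r)) ≤ α₀ * r₂ :=
    (neg_le_abs _).trans (by rw [abs_mul]; gcongr)
  have hfirst : b * (deriv φ r / φ r) ≤ b₀ * r₁ :=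
    (le_abs_self _).trans (by rw [abs_mul]; gcongr)
  have hzeroth : -C ≤ C₀ := (neg_le_abs _).trans hC
  rw [growthRate]
  linarith

lemma growthRate_trans_le_iSup {p : ℝ} {a : Fin (n + 1) → Fin (n + 1) → ℝ → ℝ}
    {b : Fin (n + 1) → ℝ → ℝ} {c φ : ℝ → ℝ}
    (ha : ∃ K, ∀ t, |a (Fin.last n) (Fin.last n) t| ≤ K) (hb : ∃ K, ∀ t, |b (Fin.last n) t| ≤ K)
    (hc : ∃ K, ∀ t, |c t| ≤ K) (hφ1 : ∃ K, ∀ r, |deriv φ r / φ r| ≤ K)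
    (hφ2 : ∃ K, ∀ r, |deriv (deriv φ) r / φ r| ≤ K) (t r : ℝ) :
    growthRate φ (a (Fin.last n) (Fin.last n) t) (transDrift p a b t (Fin.last n))
        (transPotential p a b c t) r
      ≤ (⨆ s, |a (Fin.last n) (Fin.last n) s|) * (⨆ x, |deriv (deriv φ) x / φ x|)
        + 2 * (⨆ s, |a (Fin.last n) (Fin.last n) s|) * (⨆ x, |deriv φ x / φ x|) ^ 2
        + 2 * (⨆ s, |transPotential p a b c s|)
        + (⨆ s, |transDrift p a b s (Fin.last n)|) * (⨆ x, |deriv φ x / φ x|) := by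
  have hdrift : ∃ K, ∀ s, |transDrift p a b s (Fin.last n)| ≤ K := by
    simpa only [transDrift, add_comm] using exists_abs_add_const_mul_le hb ha (2 * p)
  have hpotential : ∃ K, ∀ s, |transPotential p a b c s| ≤ K := by
    simpa only [transPotential, neg_mul, ← sub_eq_add_neg] using
      exists_abs_add_const_mul_le (exists_abs_add_const_mul_le hc hb (-p)) ha (-p ^ 2)
  exact growthRate_le (abs_le_iSup_abs ha t) (abs_le_iSup_abs hdrift t)
    (abs_le_iSup_abs hpotential t) (abs_le_iSup_abs hφ1 r) (abs_le_iSup_abs hφ2 r)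

end TransformedOperator

/-- The penalty `η t` turns a non-strict differential inequality for `W` into a contradiction at a
maximum. -/
lemma le_of_le_of_isMaxOn_sub_mul_time {X : Type*} [TopologicalSpace X] {K : Set X}
    {W : X × ℝ → ℝ} {T M : ℝ} (hK : IsCompact K) (hT : 0 < T)
    (hW : ContinuousOn W (K ×ˢ Icc 0 T)) (hinit : ∀ x ∈ K, W (x, 0) ≤ M)
    (hmax : ∀ η > 0, ∀ q ∈ K ×ˢ Ioo 0 T,
      IsMaxOn (fun y => W y - η * y.2) (K ×ˢ Icc 0 q.2) q → W q ≤ M) :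
    ∀ q ∈ K ×ˢ Icc 0 T, W q ≤ M := by
  have hbefore : ∀ x ∈ K, ∀ t ∈ Ico 0 T, W (x, t) ≤ M := by
    intro x hx t ht
    have hpenalised : ∀ η > 0, W (x, t) ≤ M + η * t := fun η hη => by
      have hcont : ContinuousOn (fun y : X × ℝ => W y - η * y.2) (K ×ˢ Icc 0 t) :=
        (hW.mono (prod_mono_right (Icc_subset_Icc_right ht.2.le))).sub (by fun_prop)
      obtain ⟨q, ⟨hqK, hq0, hqt⟩, hq⟩ :=
        (hK.prod isCompact_Icc).exists_isMaxOn ⟨(x, t), hx, ht.1, le_rfl⟩ hcont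
      have hqM : W q ≤ M := by
        rcases hq0.eq_or_lt with h0 | h0
        · simpa [h0] using hinit q.1 hqK
        · exact hmax η hη q ⟨hqK, h0, hqt.trans_lt ht.2⟩
            (hq.on_subset (prod_mono_right (Icc_subset_Icc_right hqt)))
      have hle : W (x, t) - η * t ≤ W q - η * q.2 := hq ⟨hx, ht.1, le_rfl⟩
      linarith [mul_nonneg hη.le hq0]
    have hlim : Tendsto (fun η : ℝ => M + η * t) (𝓝[>] 0) (𝓝 M) := by
      have hcont : Continuous fun η : ℝ => M + η * t := by fun_prop
      simpa using (hcont.tendsto 0).mono_left nhdsWithin_le_nhds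
    exact ge_of_tendsto hlim (eventually_mem_nhdsWithin.mono hpenalised)
  rintro ⟨x, t⟩ ⟨hx, ht⟩
  rw [← closure_Ico hT.ne] at ht
  refine le_on_closure (hbefore x hx) ?_ continuousOn_const ht
  rw [closure_Ico hT.ne]
  exact hW.comp (by fun_prop) fun s hs => ⟨hx, hs⟩

section Cylinder

variable {n : ℕ} {D D' : Set (Fin n → ℝ)} {J J' : Set ℝ} {x : Fin (n + 1) → ℝ}

/-- The splitting `ℝⁿ⁺¹ ≃ ℝⁿ × ℝ` that separates the last coordinate from the others. -/
def initLastHomeomorph (n : ℕ) : (Fin (n + 1) → ℝ) ≃ₜ (Fin n → ℝ) × ℝ where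
  toFun x := (Fin.init x, x (Fin.last n))
  invFun r := Fin.snoc (α := fun _ => ℝ) r.1 r.2
  left_inv x := Fin.snoc_init_self x
  right_inv r := by simp
  continuous_toFun := by unfold Fin.init; fun_prop
  continuous_invFun :=
    Continuous.finSnoc (A := fun _ => ℝ) continuous_fst continuous_snd

/-- The cylinder `D × J` over the cross-section `D`, the last coordinate running through `J`. -/
def cylinder (D : Set (Fin n → ℝ)) (J : Set ℝ) : Set (Fin (n + 1) → ℝ) :=
  {x | Fin.init x ∈ D ∧ x (Fin.last n) ∈ J}

lemma initLastHomeomorph_preimage_prod (D : Set (Fin n → ℝ)) (J : Set ℝ) :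
    initLastHomeomorph n ⁻¹' (D ×ˢ J) = cylinder D J := rfl

lemma snoc_mem_cylinder {X : Fin n → ℝ} {r : ℝ} :
    (Fin.snoc X r : Fin (n + 1) → ℝ) ∈ cylinder D J ↔ X ∈ D ∧ r ∈ J := by
  simp [cylinder]

lemma cylinder_subset_cylinder (hD : D ⊆ D') (hJ : J ⊆ J') : cylinder D J ⊆ cylinder D' J' :=
  fun _ hx => ⟨hD hx.1, hJ hx.2⟩

lemma isOpen_cylinder (hD : IsOpen D) (hJ : IsOpen J) : IsOpen (cylinder D J) :=
  (hD.prod hJ).preimage (initLastHomeomorph n).continuous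

lemma isCompact_cylinder (hD : IsCompact D) (hJ : IsCompact J) : IsCompact (cylinder D J) :=
  (initLastHomeomorph n).isCompact_preimage.2 (hD.prod hJ)

lemma closure_cylinder (D : Set (Fin n → ℝ)) (J : Set ℝ) :
    closure (cylinder D J) = cylinder (closure D) (closure J) := by
  rw [← initLastHomeomorph_preimage_prod, ← Homeomorph.preimage_closure, closure_prod_eq,
    initLastHomeomorph_preimage_prod]

lemma init_add_smul_single_last (x : Fin (n + 1) → ℝ) (s : ℝ) :
    Fin.init (x + s • Pi.single (Fin.last n) (1 : ℝ) : Fin (n + 1) → ℝ) = Fin.init x := by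
  ext i
  simp [Fin.init, (Fin.castSucc_lt_last i).ne]

lemma preimage_line_cylinder (hx : Fin.init x ∈ D) :
    (fun s : ℝ => x + s • Pi.single (Fin.last n) (1 : ℝ)) ⁻¹' cylinder D J
      = (fun s => x (Fin.last n) + s) ⁻¹' J := by
  ext s
  simp [cylinder, init_add_smul_single_last, hx]

lemma uniqueDiffWithinAt_line_cylinder {α β : ℝ} (hαβ : α < β)
    (hx : x ∈ cylinder D (Icc α β)) :
    UniqueDiffWithinAt ℝ
      ((fun s : ℝ => x + s • Pi.single (Fin.last n) (1 : ℝ)) ⁻¹' cylinder D (Icc α β)) 0 := by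
  rw [preimage_line_cylinder hx.1, preimage_const_add_Icc]
  exact uniqueDiffOn_Icc (sub_lt_sub_right hαβ _) 0
    ⟨sub_nonpos.2 hx.2.1, sub_nonneg.2 hx.2.2⟩

lemma preimage_line_spaceDir_prod {m : ℕ} {K : Set (Fin m → ℝ)} {I : Set ℝ}
    {q : (Fin m → ℝ) × ℝ} (hq : q.2 ∈ I) (k : Fin m) :
    (fun s : ℝ => q + s • spaceDir k) ⁻¹' (K ×ˢ I)
      = (fun s : ℝ => q.1 + s • Pi.single k (1 : ℝ)) ⁻¹' K := by
  ext s
  simp [spaceDir, hq]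

end Cylinder

section NormalDerivativeEstimate

variable {n : ℕ} {D : Set (Fin n → ℝ)} {α β T : ℝ} {F : (Fin (n + 1) → ℝ) × ℝ → ℝ}

/-- The closed space-time cylinder `cl(D) × [α, β] × [0, T]`. -/
def closedCylinder (D : Set (Fin n → ℝ)) (α β T : ℝ) : Set ((Fin (n + 1) → ℝ) × ℝ) :=
  cylinder (closure D) (Icc α β) ×ˢ Icc 0 T

/-- The cylinder `D × (α, β] × (0, T)`, which contains its right face but none of the rest of its
boundary; it is written as a half-region so that the face is a piece of a hyperplane. -/
def rightClosedCylinder (D : Set (Fin n → ℝ)) (α β T : ℝ) : Set ((Fin (n + 1) → ℝ) × ℝ) :=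
  halfRegion (cylinder D (Ioi α) ×ˢ Ioo 0 T) (spaceCoord (Fin.last n)) β

lemma mem_rightClosedCylinder {q : (Fin (n + 1) → ℝ) × ℝ} :
    q ∈ rightClosedCylinder D α β T ↔ q ∈ cylinder D (Ioc α β) ×ˢ Ioo 0 T := by
  simp only [rightClosedCylinder, halfRegion, cylinder, mem_inter_iff, mem_prod, mem_ofPred_eq,
    mem_preimage, mem_Ioi, mem_Iic, mem_Ioc, spaceCoord_apply]
  tauto

lemma isOpen_cylinder_prod_Ioo (hD : IsOpen D) : IsOpen (cylinder D (Ioi α) ×ˢ Ioo 0 T) :=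
  (isOpen_cylinder hD isOpen_Ioi).prod isOpen_Ioo

lemma rightClosedCylinder_subset_closedCylinder :
    rightClosedCylinder D α β T ⊆ closedCylinder D α β T := fun _ hq =>
  prod_mono (cylinder_subset_cylinder subset_closure Ioc_subset_Icc_self) Ioo_subset_Icc_self
    (mem_rightClosedCylinder.1 hq)

lemma uniqueDiffWithinAt_line_closedCylinder (hαβ : α < β) {q : (Fin (n + 1) → ℝ) × ℝ}
    (hq : q ∈ closedCylinder D α β T) :
    UniqueDiffWithinAt ℝ
      ((fun s : ℝ => q + s • spaceDir (Fin.last n)) ⁻¹' closedCylinder D α β T) 0 := by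
  rw [closedCylinder, preimage_line_spaceDir_prod hq.2]
  exact uniqueDiffWithinAt_line_cylinder hαβ hq.1

lemma dirDeriv_rightClosedCylinder_eq (hD : IsOpen D)
    (hF : DifferentiableOn ℝ F (closedCylinder D α β T)) (v : (Fin (n + 1) → ℝ) × ℝ) :
    EqOn (dirDeriv (rightClosedCylinder D α β T) v F) (dirDeriv (closedCylinder D α β T) v F)
      (rightClosedCylinder D α β T) := fun q hq =>
  DFunLike.congr_fun (fderivWithin_subset rightClosedCylinder_subset_closedCylinder
    (uniqueDiffOn_halfRegion (isOpen_cylinder_prod_Ioo hD) (spaceCoord_ne_zero _) q hq)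
    (hF q (rightClosedCylinder_subset_closedCylinder hq))) v

lemma normal_dirDeriv_eq_zero_of_line (hαβ : α < β)
    (hF : DifferentiableOn ℝ F (closedCylinder D α β T)) {q : (Fin (n + 1) → ℝ) × ℝ}
    (hq : q ∈ closedCylinder D α β T)
    (h0 : ∀ y ∈ closedCylinder D α β T, Fin.init y.1 = Fin.init q.1 → y.2 = q.2 → F y = 0) :
    dirDeriv (closedCylinder D α β T) (spaceDir (Fin.last n)) F q = 0 :=
  dirDeriv_eq_zero_of_line (hF q hq) (uniqueDiffWithinAt_line_closedCylinder hαβ hq) hq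
    fun s hs => h0 _ hs (init_add_smul_single_last q.1 s) (line_spaceDir_snd q _ s)

lemma continuousOn_normal_dirDeriv (hαβ : α < β)
    (hF : ContDiffOn ℝ 1 F (closedCylinder D α β T)) :
    ContinuousOn (dirDeriv (closedCylinder D α β T) (spaceDir (Fin.last n)) F)
      (closedCylinder D α β T) :=
  continuousOn_dirDeriv hF fun _ => uniqueDiffWithinAt_line_closedCylinder hαβ

lemma fderivWithin_slice_eq_normal_dirDeriv (hαβ : α < β)
    (hF : DifferentiableOn ℝ F (closedCylinder D α β T)) {q : (Fin (n + 1) → ℝ) × ℝ}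
    (hq : q ∈ closedCylinder D α β T) :
    fderivWithin ℝ (fun x => F (x, q.2)) (cylinder (closure D) (Icc α β)) q.1
        (Pi.single (Fin.last n) 1)
      = dirDeriv (closedCylinder D α β T) (spaceDir (Fin.last n)) F q :=
  dirDeriv_slice (hF q hq) hq.2 (uniqueDiffWithinAt_line_cylinder hαβ hq.1)

lemma le_sSup_left_face {W : (Fin (n + 1) → ℝ) × ℝ → ℝ} (hD : Bornology.IsBounded D)
    (hαβ : α ≤ β) (hW : ContinuousOn W (closedCylinder D α β T)) {q : (Fin (n + 1) → ℝ) × ℝ}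
    (hq : q ∈ closedCylinder D α β T) (hqα : q.1 (Fin.last n) = α) :
    W q ≤ sSup {w | ∃ X ∈ closure D, ∃ s ∈ Icc 0 T, w = W (Fin.snoc X α, s)} := by
  refine le_csSup ?_ ⟨Fin.init q.1, hq.1.1, q.2, hq.2, ?_⟩
  · have hcompact : IsCompact (closedCylinder D α β T) :=
      (isCompact_cylinder hD.isCompact_closure isCompact_Icc).prod isCompact_Icc
    refine (hcompact.bddAbove_image hW).mono ?_
    rintro _ ⟨X, hX, s, hs, rfl⟩
    exact mem_image_of_mem W ⟨snoc_mem_cylinder.2 ⟨hX, left_mem_Icc.2 hαβ⟩, hs⟩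
  · rw [← hqα, Fin.snoc_init_self]

lemma eq_zero_of_snoc_frontier_eq_zero (hD : IsOpen D)
    (h : ∀ X ∈ frontier D, ∀ r ∈ Icc α β, ∀ t ∈ Icc 0 T, F (Fin.snoc X r, t) = 0) :
    ∀ y ∈ closedCylinder D α β T, Fin.init y.1 ∉ D → F y = 0 := by
  intro y hy hyD
  have hfrontier : Fin.init y.1 ∈ frontier D := hD.frontier_eq ▸ ⟨hy.1.1, hyD⟩
  simpa only [Fin.snoc_init_self] using h _ hfrontier _ hy.1.2 _ hy.2

lemma eq_zero_of_initial_eq_zero (hαβ : α < β) (hF : ContinuousOn F (closedCylinder D α β T))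
    (h : ∀ x ∈ cylinder D (Ioo α β), F (x, 0) = 0) :
    ∀ y ∈ closedCylinder D α β T, y.2 = 0 → F y = 0 := by
  rintro ⟨x, t⟩ ⟨hx, ht⟩ (rfl : t = 0)
  have hclosure : cylinder (closure D) (Icc α β) = closure (cylinder D (Ioo α β)) := by
    rw [closure_cylinder, closure_Ioo hαβ.ne]
  have hslice : ContinuousOn (fun x => F (x, 0)) (cylinder (closure D) (Icc α β)) :=
    hF.comp (by fun_prop) fun x hx => ⟨hx, ht⟩
  exact EqOn.of_subset_closure (g := 0) h hslice continuousOn_const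
    (cylinder_subset_cylinder subset_closure Ioo_subset_Icc_self) hclosure.le hx

lemma eq_zero_of_snoc_right_eq_zero (h : ∀ X ∈ D, ∀ t ∈ Ioo 0 T, F (Fin.snoc X β, t) = 0) :
    ∀ y ∈ rightClosedCylinder D α β T, y.1 (Fin.last n) = β → F y = 0 := by
  intro y hy hyβ
  simpa only [← hyβ, Fin.snoc_init_self] using h _ hy.1.1.1 _ hy.1.2

lemma transOp_eq_parabolicWithin_rightClosedCylinder {p : ℝ}
    {a : Fin (n + 1) → Fin (n + 1) → ℝ → ℝ} {b : Fin (n + 1) → ℝ → ℝ} {c : ℝ → ℝ}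
    {ε : (Fin (n + 1) → ℝ) → ℝ → ℝ} (hD : IsOpen D)
    (hε : ContDiffOn ℝ 2 (fun q : (Fin (n + 1) → ℝ) × ℝ => ε q.1 q.2) (closedCylinder D α β T))
    {q : (Fin (n + 1) → ℝ) × ℝ} (hq : q ∈ cylinder D (Ioo α β) ×ˢ Ioo 0 T) :
    transOp p a b c ε q.1 q.2 = parabolicWithin (rightClosedCylinder D α β T)
      (fun i j => a i j q.2) (transDrift p a b q.2) (transPotential p a b c q.2)
      (fun q => ε q.1 q.2) q :=
  transOp_eq_parabolicWithin p a b c (hε.mono rightClosedCylinder_subset_closedCylinder)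
    (uniqueDiffOn_halfRegion (isOpen_cylinder_prod_Ioo hD) (spaceCoord_ne_zero _))
    (halfRegion_mem_nhds (isOpen_cylinder_prod_Ioo hD) ⟨⟨hq.1.1, hq.1.2.1⟩, hq.2⟩ hq.1.2.2)

theorem weightedSq_normal_deriv_le {A : ℝ → Fin (n + 1) → Fin (n + 1) → ℝ}
    {B : ℝ → Fin (n + 1) → ℝ} {C : ℝ → ℝ} {u : (Fin (n + 1) → ℝ) × ℝ → ℝ}
    {φ ϕ : ℝ → ℝ} {M : ℝ} (hD_open : IsOpen D)
    (hD_bdd : Bornology.IsBounded D) (hαβ : α < β) (hT : 0 < T)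
    (hF : ContDiffOn ℝ 3 F (closedCylinder D α β T))
    (hu : EqOn u (dirDeriv (closedCylinder D α β T) (spaceDir (Fin.last n)) F)
      (closedCylinder D α β T))
    (hpde : ∀ y ∈ cylinder D (Ioo α β) ×ˢ Ioo 0 T,
      parabolicWithin (rightClosedCylinder D α β T) (A y.2) (B y.2) (C y.2) F y = 0)
    (hlat : ∀ y ∈ closedCylinder D α β T, Fin.init y.1 ∉ D → F y = 0)
    (hinit : ∀ y ∈ closedCylinder D α β T, y.2 = 0 → F y = 0)
    (hright : ∀ y ∈ rightClosedCylinder D α β T, y.1 (Fin.last n) = β → F y = 0)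
    (hA : ∀ t ∈ Ioo 0 T, ∀ ξ : Fin (n + 1) → ℝ, 0 ≤ ∑ i, ∑ j, A t i j * ξ i * ξ j)
    (hA_pos : ∀ t ∈ Ioo 0 T, 0 < A t (Fin.last n) (Fin.last n))
    (hφ : ContDiff ℝ 2 φ) (hφ_pos : ∀ r, 0 < φ r)
    (hsign : ∀ t ∈ Ioo 0 T,
      2 * B t (Fin.last n) / A t (Fin.last n) (Fin.last n) + deriv φ β / φ β < 0)
    (hϕ : Differentiable ℝ ϕ) (hϕ_pos : ∀ t ∈ Ioo 0 T, 0 < ϕ t)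
    (hrate : ∀ t ∈ Ioo 0 T, ∀ r ∈ Ioc α β,
      growthRate φ (A t (Fin.last n) (Fin.last n)) (B t (Fin.last n)) (C t) r
        + deriv ϕ t / ϕ t ≤ 0)
    (hM : 0 ≤ M)
    (hleft : ∀ y ∈ closedCylinder D α β T, y.1 (Fin.last n) = α →
      weightedSq (Fin.last n) φ ϕ u y ≤ M) :
    ∀ y ∈ closedCylinder D α β T, weightedSq (Fin.last n) φ ϕ u y ≤ M := by
  have hF_diff := hF.differentiableOn three_ne_zero
  have hle_of_eq_zero : ∀ y, u y = 0 → weightedSq (Fin.last n) φ ϕ u y ≤ M := fun y hy => by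
    simpa [weightedSq, hy] using hM
  have hu_eq : EqOn (dirDeriv (rightClosedCylinder D α β T) (spaceDir (Fin.last n)) F) u
      (rightClosedCylinder D α β T) :=
    (dirDeriv_rightClosedCylinder_eq hD_open hF_diff _).trans
      (hu.symm.mono rightClosedCylinder_subset_closedCylinder)
  have hu_cont : ContinuousOn u (closedCylinder D α β T) :=
    (continuousOn_normal_dirDeriv hαβ (hF.of_le (by norm_num))).congr hu
  have hu_line : ∀ q ∈ closedCylinder D α β T, _ → u q = 0 := fun q hq h0 =>
    (hu hq).trans (normal_dirDeriv_eq_zero_of_line hαβ hF_diff hq h0)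
  refine le_of_le_of_isMaxOn_sub_mul_time
    (isCompact_cylinder hD_bdd.isCompact_closure isCompact_Icc) hT
    (continuousOn_weightedSq hu_cont hφ.continuous hϕ.continuous) (fun x hx => ?_)
    fun η hη q ⟨hqx, hqt⟩ hmax => ?_
  · exact hle_of_eq_zero _ (hu_line _ ⟨hx, le_rfl, hT.le⟩ fun y hy _ hyt => hinit y hy hyt)
  have hq : q ∈ closedCylinder D α β T := ⟨hqx, Ioo_subset_Icc_self hqt⟩
  by_cases hqD : Fin.init q.1 ∈ D
  swap
  · exact hle_of_eq_zero q (hu_line q hq fun y hy hyD _ => hlat y hy (hyD ▸ hqD))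
  rcases hqx.2.1.eq_or_lt with hqα | hqα
  · exact hleft q hq hqα.symm
  have hqS : q ∈ rightClosedCylinder D α β T :=
    mem_rightClosedCylinder.2 ⟨⟨hqD, hqα, hqx.2.2⟩, hqt⟩
  have hmax_u : IsMaxOn (fun y => weightedSq (Fin.last n) φ ϕ
      (dirDeriv (rightClosedCylinder D α β T) (spaceDir (Fin.last n)) F) y - η * y.2)
      (rightClosedCylinder D α β T ∩ {y | y.2 ≤ q.2}) q := fun y ⟨hy, hyt⟩ => by
    have hyQ := rightClosedCylinder_subset_closedCylinder hy
    simpa only [weightedSq, mem_ofPred_eq, hu_eq hy, hu_eq hqS] using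
      hmax ⟨hyQ.1, hyQ.2.1, hyt⟩
  refine hle_of_eq_zero q ((hu_eq hqS).symm.trans ?_)
  exact dirDeriv_eq_zero_of_isMaxOn_weightedSq (isOpen_cylinder_prod_Ioo hD_open) rfl
    (hF.mono rightClosedCylinder_subset_closedCylinder) hright hqS
    (fun y hy hyβ hyt => hyt ▸ hpde y ⟨⟨hy.1.1, hy.1.2, hyβ⟩, hy.2⟩) (hA _ hqt) (hA_pos _ hqt)
    hφ hφ_pos (hsign _ hqt) (hϕ q.2) (hϕ_pos _ hqt) (hrate _ hqt _ ⟨hqα, hqx.2.2⟩) hη hmax_u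

end NormalDerivativeEstimate

theorem estimate_3_right_extreme_subdomain_general
    {n : ℕ} {T p : ℝ} (hT : 0 < T)
    {a : Fin (n + 1) → Fin (n + 1) → ℝ → ℝ} {b : Fin (n + 1) → ℝ → ℝ} {c : ℝ → ℝ}
    (ha_nonneg : ∀ t ∈ Ioo 0 T, ∀ ξ : Fin (n + 1) → ℝ, 0 ≤ ∑ i, ∑ j, a i j t * ξ i * ξ j)
    (ha_pos : ∀ t ∈ Ioo 0 T, 0 < a (Fin.last n) (Fin.last n) t)
    {D : Set (Fin n → ℝ)} (hD_open : IsOpen D) (hD_bdd : Bornology.IsBounded D)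
    {aI bI : ℝ} (hab : aI < bI) {ΩI : Set (Fin (n + 1) → ℝ)}
    (hΩI : ΩI = cylinder D (Ioo aI bI))
    {ε : (Fin (n + 1) → ℝ) → ℝ → ℝ}
    (hε : ContDiffOn ℝ 3 (fun q : (Fin (n + 1) → ℝ) × ℝ => ε q.1 q.2) (closure ΩI ×ˢ Icc 0 T))
    (hε_pde : ∀ x ∈ ΩI, ∀ t ∈ Ioo 0 T, transOp p a b c ε x t = 0)
    (hε_lat : ∀ X ∈ frontier D, ∀ xn ∈ Icc aI bI, ∀ t ∈ Icc 0 T, ε (Fin.snoc X xn) t = 0)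
    (hε_ic : ∀ x ∈ ΩI, ε x 0 = 0)
    (hε_right : ∀ X ∈ D, ∀ t ∈ Ioo 0 T, ε (Fin.snoc X bI) t = 0)
    {ν : (Fin (n + 1) → ℝ) → ℝ → ℝ}
    (hν : ∀ x t, ν x t =
      fderivWithin ℝ (fun y => ε y t) (closure ΩI) x (Pi.single (Fin.last n) 1))
    {φ : ℝ → ℝ} (hφ : ContDiff ℝ 2 φ) (hφ_pos : ∀ r, 0 < φ r)
    (hφ_sign : ∀ t ∈ Ioo 0 T,
      4 * p + 2 * b (Fin.last n) t / a (Fin.last n) (Fin.last n) t + deriv φ bI / φ bI < 0)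
    {ϕ : ℝ → ℝ} (hϕ : Differentiable ℝ ϕ) (hϕ_pos : ∀ t ∈ Icc 0 T, 0 < ϕ t)
    (hϕ_decay : ∀ t ∈ Ioo 0 T, ∀ r ∈ Ioc aI bI,
      growthRate φ (a (Fin.last n) (Fin.last n) t) (transDrift p a b t (Fin.last n))
        (transPotential p a b c t) r + deriv ϕ t / ϕ t ≤ 0) :
    ∀ X ∈ closure D, ∀ xn ∈ Icc aI bI, ∀ t ∈ Icc 0 T,
      ν (Fin.snoc X xn) t ^ 2 * φ xn * ϕ t ≤
        sSup {y : ℝ | ∃ X' ∈ closure D, ∃ s ∈ Icc 0 T,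
          y = ν (Fin.snoc X' aI) s ^ 2 * φ aI * ϕ s} := by
  obtain rfl := hΩI
  have hclosure : closure (cylinder D (Ioo aI bI)) = cylinder (closure D) (Icc aI bI) := by
    rw [closure_cylinder, closure_Ioo hab.ne]
  rw [hclosure] at hε
  simp only [hclosure] at hν
  have hν_eq : EqOn (fun q => ν q.1 q.2) (dirDeriv (closedCylinder D aI bI T)
      (spaceDir (Fin.last n)) fun q => ε q.1 q.2) (closedCylinder D aI bI T) := fun q hq =>
    (hν q.1 q.2).trans
      (fderivWithin_slice_eq_normal_dirDeriv hab (hε.differentiableOn three_ne_zero) hq)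
  set W := weightedSq (Fin.last n) φ ϕ fun q => ν q.1 q.2
  have hW_cont : ContinuousOn W (closedCylinder D aI bI T) :=
    continuousOn_weightedSq ((continuousOn_normal_dirDeriv hab (hε.of_le (by norm_num))).congr
      hν_eq) hφ.continuous hϕ.continuous
  have hM : 0 ≤ sSup {w | ∃ X ∈ closure D, ∃ s ∈ Icc 0 T, w = W (Fin.snoc X aI, s)} := by
    refine Real.sSup_nonneg ?_
    rintro _ ⟨X, -, s, hs, rfl⟩
    exact weightedSq_nonneg (hφ_pos _).le (hϕ_pos s hs).le
  have hpde : ∀ y ∈ cylinder D (Ioo aI bI) ×ˢ Ioo 0 T,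
      parabolicWithin (rightClosedCylinder D aI bI T) (fun i j => a i j y.2) (transDrift p a b y.2)
        (transPotential p a b c y.2) (fun q => ε q.1 q.2) y = 0 := fun y hy =>
    (transOp_eq_parabolicWithin_rightClosedCylinder hD_open (hε.of_le (by norm_num)) hy).symm.trans
      (hε_pde _ hy.1 _ hy.2)
  have hle := weightedSq_normal_deriv_le (A := fun t i j => a i j t) (B := transDrift p a b)
    (C := transPotential p a b c) hD_open hD_bdd hab hT hε hν_eq hpde
    (eq_zero_of_snoc_frontier_eq_zero hD_open hε_lat)
    (eq_zero_of_initial_eq_zero hab hε.continuousOn hε_ic)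
    (eq_zero_of_snoc_right_eq_zero hε_right) ha_nonneg ha_pos hφ hφ_pos
    (fun t ht => by rw [two_mul_transDrift_last_div (ha_pos t ht).ne']; exact hφ_sign t ht)
    hϕ (fun t ht => hϕ_pos t (Ioo_subset_Icc_self ht)) hϕ_decay hM
    (fun y => le_sSup_left_face hD_bdd hab.le hW_cont)
  intro X hX r hr t ht
  have hle_snoc := hle (Fin.snoc X r, t) ⟨snoc_mem_cylinder.2 ⟨hX, hr⟩, ht⟩
  simpa only [W, weightedSq, Fin.snoc_last] using hle_snoc

/-- Estimate 3, right extreme subdomain: with the additional Dirichlet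
condition `ε(·,b_I,·) = 0` and the sign condition
`4p + 2bₙ/aₙₙ + φ'(b_I)/φ(b_I) < 0`, the weighted squared normal derivative
`ν² φ(xₙ) ϕ(t)`, `ν = ∂ₙε`, attains its maximum on the face `xₙ = a_I` only. -/
theorem estimate_3_right_extreme_subdomain
    {n : ℕ} (T p ν₀ : ℝ) (hT : 0 < T) (hν₀ : 0 < ν₀)
    (a : Fin (n+1) → Fin (n+1) → ℝ → ℝ) (b : Fin (n+1) → ℝ → ℝ) (c : ℝ → ℝ)
    (ha_symm : ∀ i j t, a i j t = a j i t)
    (ha_smooth : ∀ i j, ContDiff ℝ (⊤ : ℕ∞) (a i j))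
    (ha_bdd : ∀ i j, ∃ C, ∀ t, |a i j t| ≤ C)
    (hb_smooth : ∀ i, ContDiff ℝ (⊤ : ℕ∞) (b i))
    (hb_bdd : ∀ i, ∃ C, ∀ t, |b i t| ≤ C)
    (hc_smooth : ContDiff ℝ (⊤ : ℕ∞) c)
    (hc_bdd : ∃ C, ∀ t, |c t| ≤ C)
    (hell : ∀ t ∈ Ioo (0:ℝ) T, ∀ ξ : Fin (n+1) → ℝ,
      ν₀ * ∑ i, ξ i ^ 2 ≤ ∑ i, ∑ j, a i j t * ξ i * ξ j)
    (D : Set (Fin n → ℝ)) (hD_open : IsOpen D) (hD_bdd : Bornology.IsBounded D)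
    (aI bI : ℝ) (hab : aI < bI)
    (ΩI : Set (Fin (n+1) → ℝ))
    (hΩI : ΩI = {x : Fin (n+1) → ℝ | Fin.init x ∈ D ∧ x (Fin.last n) ∈ Ioo aI bI})
    (ε : (Fin (n+1) → ℝ) → ℝ → ℝ)
    (hε_smooth : ContDiffOn ℝ (⊤ : ℕ∞)
      (fun q : (Fin (n+1) → ℝ) × ℝ => ε q.1 q.2) (closure ΩI ×ˢ Icc 0 T))
    (hε_pde : ∀ x ∈ ΩI, ∀ t ∈ Ioo (0:ℝ) T, transOp p a b c ε x t = 0)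
    (hε_lat : ∀ X ∈ frontier D, ∀ xn ∈ Icc aI bI, ∀ t ∈ Icc (0:ℝ) T,
      ε (Fin.snoc X xn) t = 0)
    (hε_ic : ∀ x ∈ ΩI, ε x 0 = 0)
    (hε_right : ∀ X ∈ D, ∀ t ∈ Ioo (0:ℝ) T, ε (Fin.snoc X bI) t = 0)
    (ν : (Fin (n+1) → ℝ) → ℝ → ℝ)
    (hν : ∀ x t, ν x t =
      fderivWithin ℝ (fun y => ε y t) (closure ΩI) x (Pi.single (Fin.last n) 1))
    (φ : ℝ → ℝ) (hφ : ContDiff ℝ 2 φ) (hφ_pos : ∀ x, 0 < φ x)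
    (hφ1 : ∃ C, ∀ x, |deriv φ x / φ x| ≤ C)
    (hφ2 : ∃ C, ∀ x, |deriv (deriv φ) x / φ x| ≤ C)
    (hφ_sign : ∀ t ∈ Icc (0:ℝ) T,
      4 * p + 2 * b (Fin.last n) t / a (Fin.last n) (Fin.last n) t
        + deriv φ bI / φ bI < 0)
    (Γ : ℝ)
    (hΓ : Γ = (⨆ t, |a (Fin.last n) (Fin.last n) t|) *
            (⨆ x, |deriv (deriv φ) x / φ x|)
          + 2 * (⨆ t, |a (Fin.last n) (Fin.last n) t|) * (⨆ x, |deriv φ x / φ x|) ^ 2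
          + 2 * (⨆ t, |c t - p * b (Fin.last n) t
                        - p ^ 2 * a (Fin.last n) (Fin.last n) t|)
          + (⨆ t, |2 * p * a (Fin.last n) (Fin.last n) t + b (Fin.last n) t|) *
            (⨆ x, |deriv φ x / φ x|))
    (ϕ : ℝ → ℝ) (hϕ : ContDiff ℝ 1 ϕ)
    (hϕ_pos : ∀ t ∈ Icc (0:ℝ) T, 0 < ϕ t)
    (hϕ_decay : ∀ t ∈ Icc (0:ℝ) T, deriv ϕ t / ϕ t ≤ -Γ) :
    ∀ X ∈ closure D, ∀ xn ∈ Icc aI bI, ∀ t ∈ Icc (0:ℝ) T,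
      ν (Fin.snoc X xn) t ^ 2 * φ xn * ϕ t ≤
        sSup {y : ℝ | ∃ X' ∈ closure D, ∃ s ∈ Icc (0:ℝ) T,
          y = ν (Fin.snoc X' aI) s ^ 2 * φ aI * ϕ s} := by
  refine estimate_3_right_extreme_subdomain_general hT
    (fun t ht => sum_mul_nonneg_of_elliptic hν₀.le (hell t ht))
    (fun t ht => diag_pos_of_elliptic hν₀ (hell t ht) (Fin.last n)) hD_open hD_bdd hab hΩI
    (hε_smooth.of_le (WithTop.coe_le_coe.2 le_top)) hε_pde hε_lat hε_ic hε_right hν hφ hφ_pos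
    (fun t ht => hφ_sign t (Ioo_subset_Icc_self ht)) (hϕ.differentiable one_ne_zero) hϕ_pos
    fun t ht r _ => ?_
  have hrate := growthRate_trans_le_iSup (p := p) (ha_bdd _ _) (hb_bdd _) hc_bdd hφ1 hφ2 t r
  have hdecay := hΓ ▸ hϕ_decay t (Ioo_subset_Icc_self ht)
  simp only [transDrift, transPotential] at hrate ⊢
  linarith
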